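/- Let ρ : (0,∞) → (0,∞) satisfy ρ(t)/t → ∞ as t → ∞, and assume the tail function F̄_R(y) := P(R ≥ y) is regularly varying of index −m with m > γ. Then P(Y_t ≥ ρ(t)) = Q·D·t^{−(γ−1)}·F̄_R(ρ(t)/t)·(1+o(1)) as t → ∞, where D := m(m−1)/(γ(γ−1)(m−γ+1)(m−γ)). -/

import Mathlib

open MeasureTheory Filter Set
open scoped ENNReal NNReal Topology

noncomputable section

/-- `ℓ_t(s,u)`: the length of the interval `[s,s+u] ∩ [0,t]`. -/
def ellK (t s u : ℝ) : ℝ := max 0 (min (s + u) t - max s 0)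

/-- The intensity measure `u^{-γ-1} du` on `(0,∞)`. -/
def muU (γ : ℝ) : Measure ℝ :=
  (volume.restrict (Set.Ioi 0)).withDensity fun u => ENNReal.ofReal (u ^ (-γ - 1))

/-- The measure `μ^ℓ_t` on `(0,∞)`:
`μ^ℓ_t(A) = ∫_ℝ ∫_0^∞ 1{ℓ_t(s,u) ∈ A} u^{-γ-1} du ds`. -/
def muEll (γ t : ℝ) : Measure ℝ :=
  (Measure.map (fun p : ℝ × ℝ => ellK t p.1 p.2)
    ((volume : Measure ℝ).prod (muU γ))).restrict (Set.Ioi 0)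

/-- The measure `μ^{ℓ,r}_t` on `(0,∞)`:
`μ^{ℓ,r}_t(A) = ∫_{(0,∞)} ∫_{(0,∞)} 1{rℓ ∈ A} μ^ℓ_t(dℓ) F_R(dr)`. -/
def muEllR (γ t : ℝ) (FR : Measure ℝ) : Measure ℝ :=
  (Measure.map (fun p : ℝ × ℝ => p.1 * p.2) (FR.prod (muEll γ t))).restrict (Set.Ioi 0)

/-- The measure `ν` on `[0,1]`: density `s^{-(γ+1)} + ((2-γ)/γ)·s^{-γ}` on `(0,1)` with
respect to Lebesgue measure, together with an atom of mass `1/(γ(γ-1))` at the point `1`. -/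
def nuM (γ : ℝ) : Measure ℝ :=
  (volume.restrict (Set.Ioo 0 1)).withDensity
      (fun s => ENNReal.ofReal (s ^ (-(γ + 1)) + (2 - γ) / γ * s ^ (-γ)))
    + (Real.toNNReal (1 / (γ * (γ - 1)))) • Measure.dirac 1

instance nuM.sigmaFinite (γ : ℝ) : SigmaFinite (nuM γ) := by
  unfold nuM; infer_instance

end

section AuxProofs
noncomputable section


/-- Convolution powers. -/
def cpow (ν : Measure ℝ) : ℕ → Measure ℝ
  | 0 => Measure.dirac 0
  | n + 1 => Measure.conv (cpow ν n) ν

instance cpow_finite (ν : Measure ℝ) [IsFiniteMeasure ν] (n : ℕ) : IsFiniteMeasure (cpow ν n) := by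
  induction n with
  | zero => unfold cpow; infer_instance
  | succ n ih => unfold cpow; infer_instance

/-- The compound Poisson law with jump measure `ν`. -/
def CP (ν : Measure ℝ) : Measure ℝ :=
  ENNReal.ofReal (Real.exp (-(ν.real univ))) •
    Measure.sum (fun n : ℕ => ENNReal.ofReal ((n.factorial : ℝ)⁻¹) • cpow ν n)

lemma lintegral_cpow (ν : Measure ℝ) [IsFiniteMeasure ν] (f : ℝ → ℝ≥0∞) (hf : Measurable f)
    (h0 : f 0 = 1) (hadd : ∀ x y, f (x + y) = f x * f y) (n : ℕ) :
    ∫⁻ x, f x ∂(cpow ν n) = (∫⁻ x, f x ∂ν) ^ n := by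
  induction n with
  | zero => simp [cpow, lintegral_dirac' _ hf, h0]
  | succ n ih =>
    rw [cpow, Measure.lintegral_conv hf]
    simp_rw [hadd]
    simp_rw [lintegral_const_mul _ hf]
    rw [lintegral_mul_const _ hf, ih, pow_succ]

lemma lintegral_CP (ν : Measure ℝ) [IsFiniteMeasure ν] (f : ℝ → ℝ≥0∞) (hf : Measurable f)
    (h0 : f 0 = 1) (hadd : ∀ x y, f (x + y) = f x * f y) (a : ℝ) (ha : 0 ≤ a)
    (hfa : ∫⁻ x, f x ∂ν = ENNReal.ofReal a) :
    ∫⁻ x, f x ∂(CP ν) = ENNReal.ofReal (Real.exp (a - ν.real univ)) := by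
  rw [CP, lintegral_smul_measure, lintegral_sum_measure]
  simp_rw [lintegral_smul_measure, lintegral_cpow ν f hf h0 hadd, hfa, smul_eq_mul]
  have : ∀ n : ℕ, ENNReal.ofReal ((n.factorial : ℝ)⁻¹) * (ENNReal.ofReal a) ^ n
      = ENNReal.ofReal (a ^ n / n.factorial) := by
    intro n
    rw [← ENNReal.ofReal_pow ha, ← ENNReal.ofReal_mul (by positivity)]
    congr 1; ring
  simp_rw [this]
  rw [← ENNReal.ofReal_tsum_of_nonneg (fun n => by positivity) (Real.summable_pow_div_factorial a),
    ← ENNReal.ofReal_mul (by positivity)]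
  congr 1
  rw [sub_eq_add_neg, add_comm, Real.exp_add]
  congr 1
  rw [Real.exp_eq_exp_ℝ, NormedSpace.exp_eq_tsum_div]

instance CP_prob (ν : Measure ℝ) [IsFiniteMeasure ν] : IsProbabilityMeasure (CP ν) := by
  constructor
  have := lintegral_CP ν (fun _ => 1) measurable_const rfl (by simp) (ν.real univ) (by positivity)
    (by simp)
  simpa using this

lemma charFun_cpow (ν : Measure ℝ) [IsFiniteMeasure ν] (θ : ℝ) (n : ℕ) :
    charFun (cpow ν n) θ = (charFun ν θ) ^ n := by
  induction n with
  | zero => simp [cpow, charFun_dirac]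
  | succ n ih => rw [cpow, charFun_conv, ih, pow_succ]

lemma charFun_CP (ν : Measure ℝ) [IsFiniteMeasure ν] (θ : ℝ) :
    charFun (CP ν) θ = Complex.exp (charFun ν θ - ν.real univ) := by
  have hc : ENNReal.ofReal (Real.exp (-(ν.real univ))) ≠ 0 := by
    simpa using Real.exp_pos _
  have hfin : IsFiniteMeasure (Measure.sum (fun n : ℕ => ENNReal.ofReal ((n.factorial : ℝ)⁻¹) • cpow ν n)) := by
    constructor
    have h1 : CP ν univ < ∞ := measure_lt_top _ _
    rw [CP, Measure.smul_apply, smul_eq_mul] at h1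
    by_contra h
    rw [not_lt, top_le_iff] at h
    rw [h, ENNReal.mul_top hc] at h1
    exact lt_irrefl _ h1
  rw [charFun_apply_real, CP, integral_smul_measure, integral_sum_measure]
  · simp_rw [integral_smul_measure]
    have : ∀ n : ℕ, (∫ x, Complex.exp (θ * x * Complex.I) ∂(cpow ν n)) = (charFun ν θ) ^ n := by
      intro n; rw [← charFun_cpow, charFun_apply_real]
    simp_rw [this]
    have hexp : Complex.exp (charFun ν θ) = ∑' n : ℕ, (charFun ν θ) ^ n / n.factorial := by
      rw [Complex.exp_eq_exp_ℂ, NormedSpace.exp_eq_tsum_div]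
    rw [sub_eq_add_neg, add_comm, Complex.exp_add, hexp]
    rw [ENNReal.toReal_ofReal (by positivity), Complex.real_smul]
    congr 1
    · push_cast; rfl
    · refine tsum_congr fun n => ?_
      rw [ENNReal.toReal_ofReal (by positivity), Complex.real_smul]
      push_cast; ring
  · refine Integrable.of_bound (C := 1) (by fun_prop) (ae_of_all _ fun x => ?_)
    rw [← Complex.ofReal_mul, Complex.norm_exp_ofReal_mul_I]

lemma CP_real_ge (ν : Measure ℝ) [IsFiniteMeasure ν] (A : Set ℝ) (hA : MeasurableSet A) :
    Real.exp (-(ν.real univ)) * ((Measure.dirac (0:ℝ)).real A + ν.real A) ≤ (CP ν).real A := by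
  have h : ENNReal.ofReal (Real.exp (-(ν.real univ))) * (Measure.dirac (0:ℝ) A + ν A) ≤ CP ν A := by
    rw [CP, Measure.smul_apply, Measure.sum_apply _ hA, smul_eq_mul]
    gcongr
    refine le_trans (le_of_eq ?_) (ENNReal.sum_le_tsum (Finset.range 2))
    simp [Finset.sum_range_succ, cpow]
  have h2 := ENNReal.toReal_mono (measure_ne_top _ _) h
  rw [ENNReal.toReal_mul, ENNReal.toReal_ofReal (by positivity),
    ENNReal.toReal_add (measure_ne_top _ _) (measure_ne_top _ _)] at h2
  exact h2

lemma CP_ge (ν : Measure ℝ) [IsFiniteMeasure ν] (A : Set ℝ) (hA : MeasurableSet A) :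
    Real.exp (-(ν.real univ)) * ν.real A ≤ (CP ν).real A := by
  refine le_trans ?_ (CP_real_ge ν A hA)
  gcongr
  simp [measureReal_nonneg]

lemma CP_tail_le (ν : Measure ℝ) [IsFiniteMeasure ν] (x : ℝ) (hx : 0 < x) :
    (CP ν).real (Ici x) ≤ ν.real (Ici x) + (ν.real univ) ^ 2 := by
  have h1 := CP_real_ge ν (Iio x) measurableSet_Iio
  have h2 : (CP ν).real (Ici x) = 1 - (CP ν).real (Iio x) := by
    rw [← compl_Iio, probReal_compl_eq_one_sub measurableSet_Iio]
  have h3 : ν.real (Iio x) = ν.real univ - ν.real (Ici x) := by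
    rw [← compl_Ici, measureReal_compl measurableSet_Ici]
  have h4 : (Measure.dirac (0:ℝ)).real (Iio x) = 1 := by
    simp [Measure.real, hx]
  have h5 := Real.add_one_le_exp (-(ν.real univ))
  have h6 : Real.exp (-(ν.real univ)) ≤ 1 := by
    rw [Real.exp_le_one_iff]; have : 0 ≤ ν.real univ := measureReal_nonneg
    linarith
  have h7 : 0 ≤ ν.real univ := measureReal_nonneg
  have h8 : 0 ≤ ν.real (Ici x) := measureReal_nonneg
  rw [h2]
  rw [h4, h3] at h1
  set lam := ν.real univ
  nlinarith [mul_nonneg h8 (sub_nonneg.2 h6), mul_le_mul_of_nonneg_right h5 (by linarith : 0 ≤ 1 + lam)]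



/-- Compensated compound Poisson law. -/
def CCP (ν : Measure ℝ) : Measure ℝ := (CP ν).map (fun x => x + (-∫ v, v ∂ν))

instance CCP_prob (ν : Measure ℝ) [IsFiniteMeasure ν] : IsProbabilityMeasure (CCP ν) := by
  unfold CCP
  exact Measure.isProbabilityMeasure_map (by fun_prop)

/-- The kernel of the exponent. -/
def kk (θ v : ℝ) : ℂ := Complex.exp (θ * v * Complex.I) - 1 - θ * v * Complex.I

lemma charFun_CCP (ν : Measure ℝ) [IsFiniteMeasure ν] (hν : Integrable (fun v : ℝ => v) ν) (θ : ℝ) :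
    charFun (CCP ν) θ = Complex.exp (∫ v, kk θ v ∂ν) := by
  have h1 : Integrable (fun v : ℝ => Complex.exp (θ * v * Complex.I)) ν := by
    refine Integrable.of_bound (C := 1) (by fun_prop) (ae_of_all _ fun x => ?_)
    rw [← Complex.ofReal_mul, Complex.norm_exp_ofReal_mul_I]
  have h2 : Integrable (fun v : ℝ => θ * (v : ℂ) * Complex.I) ν :=
    (hν.ofReal.const_mul _).mul_const _
  rw [CCP, charFun_map_add_const, charFun_CP, ← Complex.exp_add]
  unfold kk
  have h3 : Integrable (fun v : ℝ => Complex.exp (θ * v * Complex.I) - 1) ν :=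
    h1.sub (integrable_const _)
  rw [integral_sub h3 h2, integral_sub h1 (integrable_const _),
    charFun_apply_real, integral_mul_const, integral_const_mul, integral_complex_ofReal]
  congr 1
  simp
  ring

lemma exp_aux (x : ℝ) : Real.exp x - 1 - x ≤ x ^ 2 * Real.exp |x| := by
  have h1 : Real.exp x - 1 ≤ x * Real.exp x := by
    have := Real.add_one_le_exp (-x)
    have h2 : Real.exp x * Real.exp (-x) = 1 := by rw [← Real.exp_add]; simp
    nlinarith [Real.exp_pos x, mul_le_mul_of_nonneg_left this (Real.exp_pos x).le]
  rcases le_total 0 x with hx | hx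
  · rw [abs_of_nonneg hx]
    have h3 := mul_le_mul_of_nonneg_left h1 hx
    have h4 : x ≤ x * Real.exp x := by nlinarith [Real.one_le_exp hx]
    nlinarith [Real.add_one_le_exp x]
  · have h3 := Real.add_one_le_exp x
    have h4 : 1 ≤ Real.exp |x| := Real.one_le_exp (abs_nonneg x)
    have h5 : x * Real.exp x ≤ x * (1 + x) := by nlinarith
    nlinarith [sq_nonneg x]

lemma chernoff (ν : Measure ℝ) [IsFiniteMeasure ν] (a V : ℝ) (hν : ∀ᵐ v ∂ν, 0 ≤ v ∧ v ≤ a)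
    (hV : ∫ v, v ^ 2 ∂ν ≤ V) (s b : ℝ) :
    (CCP ν).real {x | b ≤ s * x} ≤ Real.exp (s ^ 2 * Real.exp (|s| * a) * V - b) := by
  have hi1 : Integrable (fun v : ℝ => v) ν :=
    Integrable.of_bound (C := a) (by fun_prop) (by
      filter_upwards [hν] with v hv
      rw [Real.norm_eq_abs, abs_of_nonneg hv.1]; exact hv.2)
  have hi2 : Integrable (fun v : ℝ => v ^ 2) ν :=
    Integrable.of_bound (C := a ^ 2) (by fun_prop) (by
      filter_upwards [hν] with v hv
      rw [Real.norm_eq_abs, abs_of_nonneg (by positivity)]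
      exact pow_le_pow_left₀ hv.1 hv.2 2)
  have hb : ∀ᵐ v ∂ν, |s * v| ≤ |s| * a := by
    filter_upwards [hν] with v hv
    rw [abs_mul, abs_of_nonneg hv.1]
    exact mul_le_mul_of_nonneg_left hv.2 (abs_nonneg s)
  have hi3 : Integrable (fun v : ℝ => Real.exp (s * v)) ν :=
    Integrable.of_bound (C := Real.exp (|s| * a)) (by fun_prop) (by
      filter_upwards [hb] with v hv
      rw [Real.norm_eq_abs, abs_of_pos (Real.exp_pos _)]
      exact Real.exp_le_exp.2 ((le_abs_self _).trans hv))
  set c := ∫ v, v ∂ν with hc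
  set A := ∫ v, Real.exp (s * v) ∂ν with hA
  have hA0 : 0 ≤ A := integral_nonneg fun v => (Real.exp_pos _).le
  have hlin := lintegral_CP ν (fun x => ENNReal.ofReal (Real.exp (s * x))) (by fun_prop) (by simp)
    (fun x y => by rw [mul_add, Real.exp_add, ENNReal.ofReal_mul (Real.exp_pos _).le]) A hA0
    (by rw [hA, ofReal_integral_eq_lintegral_ofReal hi3 (ae_of_all _ fun v => (Real.exp_pos _).le)])
  have hset : (CCP ν) {x | b ≤ s * x} = (CP ν) {x | b + s * c ≤ s * x} := by
    rw [CCP, Measure.map_apply (by fun_prop) (measurableSet_le (by fun_prop) (by fun_prop))]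
    congr 1
    ext x
    simp only [mem_preimage, mem_ofPred_eq]
    rw [← hc]
    constructor <;> intro h <;> linarith
  have hmark := mul_meas_ge_le_lintegral (μ := CP ν)
    (f := fun x => ENNReal.ofReal (Real.exp (s * x))) (by fun_prop) (ENNReal.ofReal (Real.exp (b + s * c)))
  rw [hlin] at hmark
  have hset2 : {x | ENNReal.ofReal (Real.exp (b + s * c)) ≤ ENNReal.ofReal (Real.exp (s * x))}
      = {x | b + s * c ≤ s * x} := by
    ext x
    simp only [mem_ofPred_eq]
    rw [ENNReal.ofReal_le_ofReal_iff (Real.exp_pos _).le, Real.exp_le_exp]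
  rw [hset2, ← hset] at hmark
  have h2 := ENNReal.toReal_mono (by simp) hmark
  rw [ENNReal.toReal_mul, ENNReal.toReal_ofReal (Real.exp_pos _).le,
    ENNReal.toReal_ofReal (Real.exp_pos _).le] at h2
  have hkey : A - ν.real univ - s * c ≤ s ^ 2 * Real.exp (|s| * a) * V := by
    have e1 : A - ν.real univ - s * c = ∫ v, (Real.exp (s * v) - 1 - s * v) ∂ν := by
      have hi4 : Integrable (fun v : ℝ => Real.exp (s * v) - 1) ν :=
        hi3.sub (integrable_const _)
      rw [integral_sub hi4 (hi1.const_mul _),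
        integral_sub hi3 (integrable_const _), integral_const_mul]
      simp [hA, hc]
    rw [e1]
    calc ∫ v, (Real.exp (s * v) - 1 - s * v) ∂ν ≤ ∫ v, (s ^ 2 * Real.exp (|s| * a)) * v ^ 2 ∂ν := by
          refine integral_mono_ae ((hi3.sub (integrable_const _)).sub (hi1.const_mul _))
            (hi2.const_mul _) ?_
          filter_upwards [hb] with v hv
          refine (exp_aux (s * v)).trans ?_
          have := Real.exp_le_exp.2 hv
          calc (s * v) ^ 2 * Real.exp |s * v| ≤ (s * v) ^ 2 * Real.exp (|s| * a) := by gcongr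
            _ = _ := by ring
      _ = (s ^ 2 * Real.exp (|s| * a)) * ∫ v, v ^ 2 ∂ν := by rw [integral_const_mul]
      _ ≤ _ := by gcongr
  have h3 : (CCP ν).real {x | b ≤ s * x} ≤ Real.exp (A - ν.real univ - (b + s * c)) := by
    rw [Real.exp_sub, le_div_iff₀ (Real.exp_pos _), mul_comm]
    exact h2
  refine h3.trans (Real.exp_le_exp.2 ?_)
  linarith

lemma conv_upper (A B : Measure ℝ) [IsProbabilityMeasure A] [IsProbabilityMeasure B] (x y : ℝ) :
    (Measure.conv A B).real (Ici (x + y)) ≤ A.real (Ici x) + B.real (Ici y) := by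
  have h : (Measure.conv A B) (Ici (x + y)) ≤ A (Ici x) + B (Ici y) := by
    rw [Measure.conv, Measure.map_apply (by fun_prop) measurableSet_Ici]
    calc (A.prod B) ((fun p : ℝ × ℝ => p.1 + p.2) ⁻¹' Ici (x + y))
        ≤ (A.prod B) (Ici x ×ˢ univ ∪ univ ×ˢ Ici y) := by
          apply measure_mono
          rintro ⟨u, v⟩ h
          simp only [mem_preimage, mem_Ici] at h
          simp only [mem_union, mem_prod, mem_Ici, mem_univ, and_true, true_and]
          by_contra hcon
          push Not at hcon
          linarith [hcon.1, hcon.2]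
      _ ≤ _ := measure_union_le _ _
      _ = _ := by simp [Measure.prod_prod]
  have h2 := ENNReal.toReal_mono (by simp) h
  rwa [ENNReal.toReal_add (by simp) (by simp)] at h2

lemma conv_lower (A B : Measure ℝ) [IsProbabilityMeasure A] [IsProbabilityMeasure B] (x y : ℝ) :
    A.real (Ici x) * B.real (Ici y) ≤ (Measure.conv A B).real (Ici (x + y)) := by
  have h : A (Ici x) * B (Ici y) ≤ (Measure.conv A B) (Ici (x + y)) := by
    rw [Measure.conv, Measure.map_apply (by fun_prop) measurableSet_Ici, ← Measure.prod_prod]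
    apply measure_mono
    rintro ⟨u, v⟩ h
    simp only [mem_prod, mem_Ici] at h
    simp only [mem_preimage, mem_Ici]
    linarith [h.1, h.2]
  have h2 := ENNReal.toReal_mono (by simp) h
  rwa [ENNReal.toReal_mul] at h2



/-- Bundle a probability measure. -/
def mkPM (μ : Measure ℝ) [h : IsProbabilityMeasure μ] : ProbabilityMeasure ℝ := ⟨μ, h⟩

lemma coe_mkPM (μ : Measure ℝ) [IsProbabilityMeasure μ] : (mkPM μ : Measure ℝ) = μ := rfl

lemma kk_bound (p : ℝ) (hp1 : 1 < p) (hp2 : p ≤ 2) (θ v : ℝ) (hv : 0 < v) :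
    ‖kk θ v‖ ≤ 3 * |θ| ^ p * v ^ p := by
  have hx : ‖(θ * v * Complex.I : ℂ)‖ = |θ| * v := by simp [abs_of_pos hv]
  have e : 3 * |θ| ^ p * v ^ p = 3 * (|θ| * v) ^ p := by
    rw [Real.mul_rpow (abs_nonneg _) hv.le]; ring
  rw [e]
  have hxn : 0 ≤ |θ| * v := by positivity
  rcases le_total (|θ| * v) 1 with h | h
  · have h1 := Complex.norm_exp_sub_one_sub_id_le (x := (θ * v * Complex.I : ℂ)) (by rw [hx]; exact h)
    rw [hx] at h1
    have h2 : (|θ| * v) ^ 2 ≤ (|θ| * v) ^ p := by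
      rw [← Real.rpow_two]
      rcases hxn.eq_or_lt with h0 | h0
      · rw [← h0, Real.zero_rpow (by norm_num), Real.zero_rpow (by linarith)]
      · exact Real.rpow_le_rpow_of_exponent_ge h0 h hp2
    unfold kk
    have : 0 ≤ (|θ| * v) ^ p := by positivity
    linarith
  · have h1 : ‖kk θ v‖ ≤ 1 + 1 + |θ| * v := by
      unfold kk
      refine (norm_sub_le _ _).trans ?_
      rw [hx]
      gcongr
      refine (norm_sub_le _ _).trans ?_
      rw [← Complex.ofReal_mul, Complex.norm_exp_ofReal_mul_I]
      simp
    have h2 : |θ| * v ≤ (|θ| * v) ^ p := by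
      conv_lhs => rw [← Real.rpow_one (|θ| * v)]
      exact Real.rpow_le_rpow_of_exponent_le h hp1.le
    linarith

lemma kk_meas (θ : ℝ) : Measurable (fun v => kk θ v) := by
  unfold kk; fun_prop

section
variable (μ : Measure ℝ) (h0 : ∀ᵐ v ∂μ, 0 < v) (p : ℝ) (hp1 : 1 < p) (hp2 : p ≤ 2)
  (hI : Integrable (fun v : ℝ => v ^ p) μ)

include h0 hp1 hp2 hI in
lemma kk_integrable (θ : ℝ) : Integrable (fun v => kk θ v) μ := by
  refine Integrable.mono' (hI.const_mul (3 * |θ| ^ p)) (kk_meas θ).aestronglyMeasurable ?_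
  filter_upwards [h0] with v hv
  exact kk_bound p hp1 hp2 θ v hv

include hp1 in
lemma rpow_bd1 (δ v : ℝ) (hδ : 0 < δ) (hv : δ ≤ v) : v ≤ δ ^ (1 - p) * v ^ p := by
  have hv0 : 0 < v := hδ.trans_le hv
  have : v ^ (1 - p) ≤ δ ^ (1 - p) := Real.rpow_le_rpow_of_nonpos hδ hv (by linarith)
  calc v = v ^ (1 - p) * v ^ p := by rw [← Real.rpow_add hv0]; simp
    _ ≤ _ := by gcongr

include hp2 in
lemma rpow_bd2 (a v : ℝ) (hv0 : 0 < v) (hv : v ≤ a) : v ^ 2 ≤ a ^ (2 - p) * v ^ p := by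
  have : v ^ (2 - p) ≤ a ^ (2 - p) := Real.rpow_le_rpow hv0.le hv (by linarith)
  calc v ^ 2 = v ^ (2 - p) * v ^ p := by rw [← Real.rpow_add hv0]; simp
    _ ≤ _ := by gcongr

include hp1 hI in
lemma int_Ici (δ : ℝ) (hδ : 0 < δ) : IntegrableOn (fun v : ℝ => v) (Ici δ) μ := by
  refine Integrable.mono' (hI.integrableOn.const_mul (δ ^ (1 - p))) (by fun_prop) ?_
  filter_upwards [ae_restrict_mem measurableSet_Ici] with v hv
  rw [mem_Ici] at hv
  rw [Real.norm_eq_abs, abs_of_pos (hδ.trans_le hv)]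
  exact rpow_bd1 p hp1 δ v hδ hv

include hp1 hI in
lemma meas_Ici_lt (δ : ℝ) (hδ : 0 < δ) : μ (Ici δ) < ∞ := by
  have h1 := int_Ici μ p hp1 hI δ hδ
  have h2 : IntegrableOn (fun _ : ℝ => δ) (Ici δ) μ := by
    refine Integrable.mono' h1 (by fun_prop) ?_
    filter_upwards [ae_restrict_mem measurableSet_Ici] with v hv
    rw [mem_Ici] at hv
    rwa [Real.norm_eq_abs, abs_of_pos hδ]
  rw [integrableOn_const_iff] at h2
  rcases h2 with h | h
  · simp at h; exact absurd h hδ.ne'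
  · exact h

include h0 hp1 hI in
lemma mean_tail (a : ℝ) (ha : 0 < a) : ∫ v in Ici a, v ∂μ ≤ a ^ (1 - p) * ∫ v, v ^ p ∂μ := by
  rw [← integral_const_mul]
  calc ∫ v in Ici a, v ∂μ ≤ ∫ v in Ici a, a ^ (1 - p) * v ^ p ∂μ := by
        refine setIntegral_mono_on (int_Ici μ p hp1 hI a ha) (hI.integrableOn.const_mul _)
          measurableSet_Ici (fun v hv => rpow_bd1 p hp1 a v ha hv)
    _ ≤ _ := by
        refine setIntegral_le_integral (hI.const_mul _) ?_
        filter_upwards [h0] with v hv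
        have : 0 < v := hv
        show 0 ≤ _
        positivity

include h0 hp2 hI in
lemma var_small (δ a : ℝ) (hδ : 0 < δ) (ha : 0 < a) :
    ∫ v in Ico δ a, v ^ 2 ∂μ ≤ a ^ (2 - p) * ∫ v, v ^ p ∂μ := by
  rw [← integral_const_mul]
  have hb : ∀ v ∈ Ico δ a, v ^ 2 ≤ a ^ (2 - p) * v ^ p := fun v hv =>
    rpow_bd2 p hp2 a v (hδ.trans_le hv.1) hv.2.le
  have h1 : IntegrableOn (fun v : ℝ => v ^ 2) (Ico δ a) μ := by
    refine Integrable.mono' (hI.integrableOn.const_mul (a ^ (2 - p))) (by fun_prop) ?_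
    filter_upwards [ae_restrict_mem measurableSet_Ico] with v hv
    rw [Real.norm_eq_abs, abs_of_nonneg (by positivity)]
    exact hb v hv
  calc ∫ v in Ico δ a, v ^ 2 ∂μ ≤ ∫ v in Ico δ a, a ^ (2 - p) * v ^ p ∂μ := by
        refine setIntegral_mono_on h1 (hI.integrableOn.const_mul _)
          measurableSet_Ico hb
    _ ≤ _ := by
        refine setIntegral_le_integral (hI.const_mul _) ?_
        filter_upwards [h0] with v hv
        have : 0 < v := hv
        show 0 ≤ _
        positivity

include h0 hp1 hp2 hI in
lemma CCP_split (δ a : ℝ) (hδ : 0 < δ) (hδa : δ ≤ a) :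
    CCP (μ.restrict (Ici δ)) = Measure.conv (CCP (μ.restrict (Ico δ a))) (CCP (μ.restrict (Ici a))) := by
  have ha : 0 < a := hδ.trans_le hδa
  have f1 : IsFiniteMeasure (μ.restrict (Ici δ)) := ⟨by simpa using meas_Ici_lt μ p hp1 hI δ hδ⟩
  have f2 : IsFiniteMeasure (μ.restrict (Ici a)) := ⟨by simpa using meas_Ici_lt μ p hp1 hI a ha⟩
  have f3 : IsFiniteMeasure (μ.restrict (Ico δ a)) := ⟨by
    simpa using (measure_mono Ico_subset_Ici_self).trans_lt (meas_Ici_lt μ p hp1 hI δ hδ)⟩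
  apply Measure.ext_of_charFun
  ext θ
  have hk := kk_integrable μ h0 p hp1 hp2 hI θ
  rw [charFun_conv, charFun_CCP _ (int_Ici μ p hp1 hI δ hδ), charFun_CCP _ (int_Ici μ p hp1 hI a ha),
    charFun_CCP _ ((int_Ici μ p hp1 hI δ hδ).mono_set Ico_subset_Ici_self), ← Complex.exp_add,
    ← setIntegral_union _ measurableSet_Ici hk.integrableOn hk.integrableOn,
    Ico_union_Ici_eq_Ici hδa]
  rw [Set.disjoint_left]
  intro x hx hx2
  exact absurd hx.2 (not_lt.2 hx2)

variable (π : Measure ℝ) [IsProbabilityMeasure π]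
  (hπ : ∀ θ : ℝ, charFun π θ = Complex.exp (∫ v, kk θ v ∂μ))

include h0 hp1 hp2 hI hπ in
lemma CCP_tendsto (hfin : ∀ n : ℕ, IsFiniteMeasure (μ.restrict (Ici (1 / ((n : ℝ) + 1))))) :
    Tendsto (fun n : ℕ => mkPM (CCP (μ.restrict (Ici (1 / ((n : ℝ) + 1))))))
      atTop (𝓝 (mkPM π)) := by
  rw [ProbabilityMeasure.tendsto_iff_tendsto_charFun]
  intro θ
  simp only [coe_mkPM]
  have hk := kk_integrable μ h0 p hp1 hp2 hI θ
  have hpos : ∀ n : ℕ, 0 < 1 / ((n : ℝ) + 1) := fun n => by positivity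
  simp_rw [fun n : ℕ => charFun_CCP _ (int_Ici μ p hp1 hI _ (hpos n)) θ, hπ]
  refine (Complex.continuous_exp.tendsto _).comp ?_
  have hU : (⋃ n : ℕ, Ici (1 / ((n : ℝ) + 1))) = Ioi 0 := by
    ext x
    simp only [mem_iUnion, mem_Ici, mem_Ioi]
    constructor
    · rintro ⟨n, hn⟩; exact (hpos n).trans_le hn
    · intro hx
      obtain ⟨n, hn⟩ := exists_nat_one_div_lt hx
      exact ⟨n, hn.le⟩
  have := tendsto_setIntegral_of_monotone (f := fun v => kk θ v) (μ := μ)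
    (s := fun n : ℕ => Ici (1 / ((n : ℝ) + 1))) (fun n => measurableSet_Ici) (by
      intro i j hij
      apply Ici_subset_Ici.2
      exact Nat.one_div_le_one_div hij) hk.integrableOn
  rw [hU, Measure.restrict_eq_self_of_ae_mem (s := Ioi 0) h0] at this
  exact this

include h0 hp1 hp2 hI hπ in
lemma pi_upper (a h x s : ℝ) (ha : 0 < a) (hx : 0 < x) (hs : 0 < s) :
    π.real (Ioi (h + x)) ≤ Real.exp (s ^ 2 * Real.exp (s * a) * (a ^ (2 - p) * ∫ v, v ^ p ∂μ) - s * h)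
      + (μ.real (Ici x) + (μ.real (Ici a)) ^ 2) := by
  have hpos : ∀ n : ℕ, 0 < 1 / ((n : ℝ) + 1) := fun n => by positivity
  have hfin : ∀ n : ℕ, IsFiniteMeasure (μ.restrict (Ici (1 / ((n : ℝ) + 1)))) := fun n =>
    ⟨by simpa using meas_Ici_lt μ p hp1 hI _ (hpos n)⟩
  have hlim := CCP_tendsto μ h0 p hp1 hp2 hI π hπ hfin
  have hle := ProbabilityMeasure.le_liminf_measure_open_of_tendsto hlim (isOpen_Ioi (a := h + x))
  simp only [coe_mkPM] at hle
  set C := Real.exp (s ^ 2 * Real.exp (s * a) * (a ^ (2 - p) * ∫ v, v ^ p ∂μ) - s * h)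
      + (μ.real (Ici x) + (μ.real (Ici a)) ^ 2) with hC
  have hC0 : 0 ≤ C := by positivity
  have hev : ∀ᶠ n : ℕ in atTop, (CCP (μ.restrict (Ici (1 / ((n : ℝ) + 1))))) (Ioi (h + x)) ≤ ENNReal.ofReal C := by
    have : ∀ᶠ n : ℕ in atTop, 1 / ((n : ℝ) + 1) < a :=
      tendsto_one_div_add_atTop_nhds_zero_nat.eventually (eventually_lt_nhds ha)
    filter_upwards [this] with n hn
    set δ := 1 / ((n : ℝ) + 1) with hδ
    have hδ0 : 0 < δ := hpos n
    have f2 : IsFiniteMeasure (μ.restrict (Ici a)) := ⟨by simpa using meas_Ici_lt μ p hp1 hI a ha⟩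
    have f3 : IsFiniteMeasure (μ.restrict (Ico δ a)) := ⟨by
      simpa using (measure_mono Ico_subset_Ici_self).trans_lt (meas_Ici_lt μ p hp1 hI δ hδ0)⟩
    rw [ENNReal.le_ofReal_iff_toReal_le (measure_ne_top _ _) hC0]
    change (CCP (μ.restrict (Ici δ))).real _ ≤ C
    refine (measureReal_mono Ioi_subset_Ici_self).trans ?_
    rw [CCP_split μ h0 p hp1 hp2 hI δ a hδ0 hn.le]
    refine (conv_upper _ _ h x).trans ?_
    rw [hC]
    gcongr ?_ + ?_
    · have hch := chernoff (μ.restrict (Ico δ a)) a _ (by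
        filter_upwards [ae_restrict_mem measurableSet_Ico] with v hv
        exact ⟨hδ0.le.trans hv.1, hv.2.le⟩) (var_small μ h0 p hp2 hI δ a hδ0 ha) s (s * h)
      rw [abs_of_pos hs] at hch
      refine le_trans (le_of_eq ?_) hch
      congr 1
      ext y
      simp [mul_le_mul_iff_right₀ hs]
    · have hc : 0 ≤ ∫ v in Ici a, v ∂μ := setIntegral_nonneg measurableSet_Ici fun v hv => ha.le.trans hv
      have e1 : (CCP (μ.restrict (Ici a))).real (Ici x) ≤ (CP (μ.restrict (Ici a))).real (Ici x) := by
        rw [CCP, map_measureReal_apply (by fun_prop) measurableSet_Ici]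
        refine measureReal_mono ?_ (measure_ne_top _ _)
        intro y hy
        simp only [mem_preimage, mem_Ici] at hy ⊢
        linarith
      refine e1.trans ((CP_tail_le _ x hx).trans ?_)
      have e2 : (μ.restrict (Ici a)).real (Ici x) ≤ μ.real (Ici x) := by
        rw [measureReal_restrict_apply measurableSet_Ici]
        exact measureReal_mono inter_subset_left (meas_Ici_lt μ p hp1 hI x hx).ne
      have e3 : (μ.restrict (Ici a)).real univ = μ.real (Ici a) := by
        rw [measureReal_restrict_apply MeasurableSet.univ, univ_inter]
      rw [e3]
      gcongr
  have h2 : π (Ioi (h + x)) ≤ ENNReal.ofReal C :=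
    hle.trans (le_trans liminf_le_limsup (limsup_le_of_le (by isBoundedDefault) hev))
  exact ENNReal.toReal_le_of_le_ofReal hC0 h2

include h0 hp1 hp2 hI hπ in
lemma pi_lower (a h x y s : ℝ) (ha : 0 < a) (hs : 0 < s) (hy : a ≤ y)
    (hxy : x + h + a ^ (1 - p) * ∫ v, v ^ p ∂μ ≤ y) :
    (1 - Real.exp (s ^ 2 * Real.exp (s * a) * (a ^ (2 - p) * ∫ v, v ^ p ∂μ) - s * h))
      * (Real.exp (-(μ.real (Ici a))) * μ.real (Ici y)) ≤ π.real (Ici x) := by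
  have hpos : ∀ n : ℕ, 0 < 1 / ((n : ℝ) + 1) := fun n => by positivity
  have hfin : ∀ n : ℕ, IsFiniteMeasure (μ.restrict (Ici (1 / ((n : ℝ) + 1)))) := fun n =>
    ⟨by simpa using meas_Ici_lt μ p hp1 hI _ (hpos n)⟩
  have hlim := CCP_tendsto μ h0 p hp1 hp2 hI π hπ hfin
  have hle := ProbabilityMeasure.limsup_measure_closed_le_of_tendsto hlim (isClosed_Ici (a := x))
  simp only [coe_mkPM] at hle
  set E := Real.exp (s ^ 2 * Real.exp (s * a) * (a ^ (2 - p) * ∫ v, v ^ p ∂μ) - s * h) with hE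
  set C := (1 - E) * (Real.exp (-(μ.real (Ici a))) * μ.real (Ici y)) with hC
  have hev : ∀ᶠ n : ℕ in atTop, ENNReal.ofReal C ≤ (CCP (μ.restrict (Ici (1 / ((n : ℝ) + 1))))) (Ici x) := by
    have : ∀ᶠ n : ℕ in atTop, 1 / ((n : ℝ) + 1) < a :=
      tendsto_one_div_add_atTop_nhds_zero_nat.eventually (eventually_lt_nhds ha)
    filter_upwards [this] with n hn
    set δ := 1 / ((n : ℝ) + 1) with hδ
    have hδ0 : 0 < δ := hpos n
    have f2 : IsFiniteMeasure (μ.restrict (Ici a)) := ⟨by simpa using meas_Ici_lt μ p hp1 hI a ha⟩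
    have f3 : IsFiniteMeasure (μ.restrict (Ico δ a)) := ⟨by
      simpa using (measure_mono Ico_subset_Ici_self).trans_lt (meas_Ici_lt μ p hp1 hI δ hδ0)⟩
    rw [ENNReal.ofReal_le_iff_le_toReal (measure_ne_top _ _)]
    change C ≤ (CCP (μ.restrict (Ici δ))).real _
    rw [CCP_split μ h0 p hp1 hp2 hI δ a hδ0 hn.le]
    have hcl := conv_lower (CCP (μ.restrict (Ico δ a))) (CCP (μ.restrict (Ici a))) (-h) (x + h)
    rw [show -h + (x + h) = x by ring] at hcl
    refine le_trans ?_ hcl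
    have hA : 1 - E ≤ (CCP (μ.restrict (Ico δ a))).real (Ici (-h)) := by
      have hch := chernoff (μ.restrict (Ico δ a)) a _ (by
        filter_upwards [ae_restrict_mem measurableSet_Ico] with v hv
        exact ⟨hδ0.le.trans hv.1, hv.2.le⟩) (var_small μ h0 p hp2 hI δ a hδ0 ha) (-s) (s * h)
      rw [abs_neg, abs_of_pos hs, neg_sq] at hch
      have e : (CCP (μ.restrict (Ico δ a))).real (Ici (-h)) = 1 - (CCP (μ.restrict (Ico δ a))).real (Iio (-h)) := by
        rw [← compl_Iio, probReal_compl_eq_one_sub measurableSet_Iio]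
      rw [e]
      have : (CCP (μ.restrict (Ico δ a))).real (Iio (-h)) ≤ E := by
        refine le_trans (measureReal_mono ?_) hch
        intro z hz
        simp only [mem_Iio] at hz
        simp only [mem_ofPred_eq]
        nlinarith
      linarith
    have hB : Real.exp (-(μ.real (Ici a))) * μ.real (Ici y) ≤ (CCP (μ.restrict (Ici a))).real (Ici (x + h)) := by
      have e1 : (CP (μ.restrict (Ici a))).real (Ici y) ≤ (CCP (μ.restrict (Ici a))).real (Ici (x + h)) := by
        rw [CCP, map_measureReal_apply (by fun_prop) measurableSet_Ici]
        refine measureReal_mono ?_ (measure_ne_top _ _)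
        have := mean_tail μ h0 p hp1 hI a ha
        intro z hz
        simp only [mem_preimage, mem_Ici] at hz ⊢
        linarith
      refine le_trans ?_ e1
      have e2 := CP_ge (μ.restrict (Ici a)) (Ici y) measurableSet_Ici
      have e3 : (μ.restrict (Ici a)).real univ = μ.real (Ici a) := by
        rw [measureReal_restrict_apply MeasurableSet.univ, univ_inter]
      have e4 : (μ.restrict (Ici a)).real (Ici y) = μ.real (Ici y) := by
        rw [measureReal_restrict_apply measurableSet_Ici, inter_eq_left.2 (Ici_subset_Ici.2 hy)]
      rwa [e3, e4] at e2
    calc C ≤ (CCP (μ.restrict (Ico δ a))).real (Ici (-h)) * (Real.exp (-(μ.real (Ici a))) * μ.real (Ici y)) := by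
          rw [hC]; gcongr
      _ ≤ _ := by gcongr
  have h2 : ENNReal.ofReal C ≤ π (Ici x) := by
    refine le_trans ?_ hle
    refine le_trans ?_ liminf_le_limsup
    exact le_liminf_of_le (by isBoundedDefault) hev
  rw [ENNReal.ofReal_le_iff_le_toReal (measure_ne_top _ _)] at h2
  exact h2
end


section
variable (G : ℝ → ℝ) (hG : Antitone G) (hG0 : ∀ y, 0 ≤ G y) (m : ℝ)
  (hreg : ∀ c : ℝ, 0 < c → Tendsto (fun y => G (c * y) / G y) atTop (𝓝 (c ^ (-m))))

include hG hG0 hreg in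
lemma RV_pos (y : ℝ) : 0 < G y := by
  have h := hreg 1 one_pos
  rw [Real.one_rpow] at h
  have h2 := h.eventually (eventually_gt_nhds (show (0:ℝ) < 1 by norm_num))
  obtain ⟨z, hz1, hz2⟩ := (h2.and (eventually_ge_atTop y)).exists
  have : G z ≠ 0 := by
    intro h0; rw [h0] at hz1; simp at hz1
  exact ((hG0 z).lt_of_ne this.symm).trans_le (hG hz2)

include hG hG0 hreg in
lemma potter_upper (m1 : ℝ) (hm1 : 0 < m1) (hm : m1 < m) :
    ∃ C y0 : ℝ, 0 < C ∧ 0 < y0 ∧ ∀ y, y0 ≤ y → ∀ w, 0 < w → w ≤ 1 →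
      G (y / w) ≤ C * w ^ m1 * G y := by
  have hpos := RV_pos G hG hG0 m hreg
  have hlt : (2:ℝ) ^ (-m) < 2 ^ (-m1) := Real.rpow_lt_rpow_of_exponent_lt (by norm_num) (by linarith)
  obtain ⟨y1, hy1⟩ := eventually_atTop.1 ((hreg 2 two_pos).eventually (eventually_lt_nhds hlt))
  set y0 := max y1 1 with hy0
  have hstep : ∀ y, y0 ≤ y → G (2 * y) ≤ 2 ^ (-m1) * G y := by
    intro y hy
    have := hy1 y ((le_max_left _ _).trans hy)
    rw [div_lt_iff₀ (hpos y)] at this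
    exact this.le
  have hy00 : 0 < y0 := lt_of_lt_of_le one_pos (le_max_right _ _)
  have hiter : ∀ n : ℕ, ∀ y, y0 ≤ y → G (2 ^ n * y) ≤ ((2:ℝ) ^ n) ^ (-m1) * G y := by
    intro n
    induction n with
    | zero => intro y hy; simp
    | succ n ih =>
      intro y hy
      have h1 : y0 ≤ 2 ^ n * y := by
        have : (1:ℝ) ≤ 2 ^ n := one_le_pow₀ (by norm_num)
        nlinarith
      have h2 := hstep _ h1
      calc G (2 ^ (n + 1) * y) = G (2 * (2 ^ n * y)) := by congr 1; ring
        _ ≤ 2 ^ (-m1) * G (2 ^ n * y) := h2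
        _ ≤ 2 ^ (-m1) * (((2:ℝ) ^ n) ^ (-m1) * G y) := by gcongr; exact ih y hy
        _ = _ := by rw [pow_succ, Real.mul_rpow (by positivity) (by positivity)]; ring
  refine ⟨2 ^ m1, y0, by positivity, hy00, fun y hy w hw hw1 => ?_⟩
  obtain ⟨n, hn1, hn2⟩ := exists_nat_pow_near (one_le_one_div hw hw1) (one_lt_two (α := ℝ))
  have hy' : 0 < y := hy00.trans_le hy
  calc G (y / w) ≤ G (2 ^ n * y) := by
        apply hG
        rw [div_eq_mul_one_div, mul_comm]
        gcongr
    _ ≤ ((2:ℝ) ^ n) ^ (-m1) * G y := hiter n y hy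
    _ ≤ (1 / (2 * w)) ^ (-m1) * G y := by
        gcongr ?_ * _
        · exact hG0 y
        · apply Real.rpow_le_rpow_of_nonpos (by positivity) _ (by linarith)
          rw [pow_succ] at hn2
          rw [one_div, mul_inv, ← one_div w]
          linarith
    _ = _ := by
        rw [one_div, Real.inv_rpow (by positivity), Real.rpow_neg (by positivity), inv_inv,
          Real.mul_rpow (by positivity) hw.le]

include hG hG0 hreg in
lemma potter_lower (m2 : ℝ) (hm2 : 0 < m2) (hm : m < m2) :
    ∃ c y0 : ℝ, 0 < c ∧ 0 < y0 ∧ ∀ x, y0 ≤ x → c * x ^ (-m2) ≤ G x := by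
  have hpos := RV_pos G hG hG0 m hreg
  have hlt : (2:ℝ) ^ (-m2) < 2 ^ (-m) := Real.rpow_lt_rpow_of_exponent_lt (by norm_num) (by linarith)
  obtain ⟨y1, hy1⟩ := eventually_atTop.1 ((hreg 2 two_pos).eventually (eventually_gt_nhds hlt))
  set y0 := max y1 1 with hy0
  have hstep : ∀ y, y0 ≤ y → 2 ^ (-m2) * G y ≤ G (2 * y) := by
    intro y hy
    have := hy1 y ((le_max_left _ _).trans hy)
    rw [lt_div_iff₀ (hpos y)] at this
    exact this.le
  have hy00 : 0 < y0 := lt_of_lt_of_le one_pos (le_max_right _ _)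
  have hiter : ∀ n : ℕ, ((2:ℝ) ^ n) ^ (-m2) * G y0 ≤ G (2 ^ n * y0) := by
    intro n
    induction n with
    | zero => simp
    | succ n ih =>
      have h1 : y0 ≤ 2 ^ n * y0 := by
        have : (1:ℝ) ≤ 2 ^ n := one_le_pow₀ (by norm_num)
        nlinarith
      have h2 := hstep _ h1
      calc ((2:ℝ) ^ (n + 1)) ^ (-m2) * G y0 = 2 ^ (-m2) * (((2:ℝ) ^ n) ^ (-m2) * G y0) := by
            rw [pow_succ, Real.mul_rpow (by positivity) (by positivity)]; ring
        _ ≤ 2 ^ (-m2) * G (2 ^ n * y0) := by gcongr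
        _ ≤ _ := h2
        _ = G (2 ^ (n + 1) * y0) := by congr 1; ring
  refine ⟨(2 / y0) ^ (-m2) * G y0, y0, mul_pos (by positivity) (hpos _), hy00, fun x hx => ?_⟩
  obtain ⟨n, hn1, hn2⟩ := exists_nat_pow_near ((one_le_div hy00).2 hx) (one_lt_two (α := ℝ))
  have hx0 : 0 < x := hy00.trans_le hx
  calc (2 / y0) ^ (-m2) * G y0 * x ^ (-m2) = (2 * (x / y0)) ^ (-m2) * G y0 := by
        rw [show 2 * (x / y0) = (2 / y0) * x by ring, Real.mul_rpow (by positivity) hx0.le]; ring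
    _ ≤ ((2:ℝ) ^ (n + 1)) ^ (-m2) * G y0 := by
        gcongr ?_ * _
        · exact hG0 _
        · apply Real.rpow_le_rpow_of_nonpos (by positivity) _ (by linarith)
          rw [pow_succ]; linarith
    _ ≤ G (2 ^ (n + 1) * y0) := hiter _
    _ ≤ G x := by
        apply hG
        rw [div_lt_iff₀ hy00] at hn2
        exact hn2.le
end



lemma ell_set (t x u : ℝ) (hx : 0 < x) (hxt : x ≤ t) :
    {s : ℝ | x ≤ ellK t s u} = if x ≤ u then Icc (x - u) (t - x) else ∅ := by
  ext s
  unfold ellK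
  split_ifs with h
  · simp only [mem_ofPred_eq, mem_Icc, le_max_iff, le_sub_iff_add_le, le_min_iff, ← max_add_add_left,
      max_le_iff]
    constructor
    · rintro (h1 | ⟨⟨h1, h2⟩, h3, h4⟩)
      · linarith
      · constructor <;> linarith
    · rintro ⟨h1, h2⟩
      right
      refine ⟨⟨?_, ?_⟩, ?_, ?_⟩ <;> linarith
  · simp only [mem_ofPred_eq, mem_empty_iff_false, iff_false, le_max_iff, le_sub_iff_add_le, le_min_iff,
      ← max_add_add_left, max_le_iff]
    rintro (h1 | ⟨⟨h1, h2⟩, h3, h4⟩)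
    · linarith
    · apply h; linarith

lemma ell_set_empty (t x u : ℝ) (hx : 0 < x) (hxt : t < x) :
    {s : ℝ | x ≤ ellK t s u} = ∅ := by
  ext s
  unfold ellK
  simp only [mem_ofPred_eq, mem_empty_iff_false, iff_false, le_max_iff, le_sub_iff_add_le, le_min_iff,
      ← max_add_add_left, max_le_iff]
  rintro (h1 | ⟨⟨h1, h2⟩, h3, h4⟩) <;> linarith

lemma ellK_meas (t : ℝ) : Measurable (fun p : ℝ × ℝ => ellK t p.1 p.2) := by
  unfold ellK; fun_prop

instance muU_sfin (γ : ℝ) : SFinite (muU γ) := by unfold muU; infer_instance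
instance muEll_sfin (γ t : ℝ) : SFinite (muEll γ t) := by unfold muEll; infer_instance

lemma muEll_Ici_eq (γ t x : ℝ) (hx : 0 < x) :
    muEll γ t (Ici x) = ∫⁻ u, volume {s : ℝ | x ≤ ellK t s u} ∂(muU γ) := by
  rw [muEll, Measure.restrict_apply measurableSet_Ici,
    inter_eq_left.2 (show Ici x ⊆ Ioi 0 from fun y hy => hx.trans_le hy),
    Measure.map_apply (ellK_meas t) measurableSet_Ici,
    Measure.prod_apply_symm (ellK_meas t measurableSet_Ici)]
  rfl

lemma muEll_Ici (γ t x : ℝ) (hγ1 : 1 < γ) (hx : 0 < x) (hxt : x ≤ t) :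
    muEll γ t (Ici x) = ENNReal.ofReal ((t - 2 * x) * (x ^ (-γ) / γ) + x ^ (1 - γ) / (γ - 1)) := by
  have ht : 0 < t := hx.trans_le hxt
  rw [muEll_Ici_eq γ t x hx, muU, lintegral_withDensity_eq_lintegral_mul₀ (by fun_prop)]
  swap
  · have : Measurable fun u => volume {s : ℝ | x ≤ ellK t s u} := by
      exact measurable_measure_prodMk_right (ellK_meas t measurableSet_Ici)
    exact this.aemeasurable
  have h1 : ∀ u, u ∈ Ioi (0:ℝ) → ((fun u : ℝ => ENNReal.ofReal (u ^ (-γ - 1))) *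
      fun u => volume {s : ℝ | x ≤ ellK t s u}) u =
      (Ici x).indicator (fun u => ENNReal.ofReal ((t - 2 * x) * u ^ (-γ - 1) + u ^ (-γ))) u := by
    intro u hu
    have hu : 0 < u := hu
    simp only [Pi.mul_apply]
    rw [ell_set t x u hx hxt]
    by_cases h : x ≤ u
    · rw [if_pos h, indicator_of_mem (by exact h), Real.volume_Icc, ← ENNReal.ofReal_mul (by positivity)]
      congr 1
      have : u ^ (-γ) = u ^ (-γ - 1) * u := by
        rw [← Real.rpow_add_one hu.ne']; congr 1; ring
      rw [this]; ring
    · rw [if_neg h, indicator_of_notMem (by exact h)]; simp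
  rw [setLIntegral_congr_fun measurableSet_Ioi h1, setLIntegral_indicator measurableSet_Ici,
    inter_eq_left.2 (show Ici x ⊆ Ioi 0 from fun y hy => hx.trans_le hy),
    ← Measure.restrict_congr_set Ioi_ae_eq_Ici]
  have i1 : IntegrableOn (fun u : ℝ => u ^ (-γ - 1)) (Ioi x) := integrableOn_Ioi_rpow_of_lt (by linarith) hx
  have i2 : IntegrableOn (fun u : ℝ => u ^ (-γ)) (Ioi x) := integrableOn_Ioi_rpow_of_lt (by linarith) hx
  have i3 : IntegrableOn (fun u : ℝ => (t - 2 * x) * u ^ (-γ - 1) + u ^ (-γ)) (Ioi x) :=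
    (i1.const_mul _).add i2
  rw [← ofReal_integral_eq_lintegral_ofReal i3]
  · rw [integral_add (i1.const_mul _) i2, integral_const_mul, integral_Ioi_rpow_of_lt (by linarith) hx,
      integral_Ioi_rpow_of_lt (by linarith) hx]
    congr 2
    · rw [show -γ - 1 + 1 = -γ by ring]; field_simp
    · rw [show -γ + 1 = -(γ - 1) by ring, show 1 - γ = -(γ - 1) by ring, neg_div_neg_eq]
  · filter_upwards [ae_restrict_mem measurableSet_Ioi] with u hu
    have hu' : 0 < u := hx.trans hu
    have hu2 : x < u := hu
    have : u ^ (-γ) = u ^ (-γ - 1) * u := by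
        rw [← Real.rpow_add_one hu'.ne']; congr 1; ring
    show 0 ≤ (t - 2 * x) * u ^ (-γ - 1) + u ^ (-γ)
    rw [this, show (t - 2 * x) * u ^ (-γ - 1) + u ^ (-γ - 1) * u = u ^ (-γ - 1) * (t - 2 * x + u) by ring]
    have : 0 ≤ t - 2 * x + u := by linarith
    positivity

lemma muEll_Ici_zero (γ t x : ℝ) (hx : 0 < x) (hxt : t < x) : muEll γ t (Ici x) = 0 := by
  rw [muEll_Ici_eq γ t x hx]
  simp [ell_set_empty t x _ hx hxt]

lemma nuM_lintegral (γ : ℝ) (f : ℝ → ℝ≥0∞) (hf : Measurable f) :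
    ∫⁻ w, f w ∂(nuM γ) = (∫⁻ s in Ioo 0 1, ENNReal.ofReal (s ^ (-(γ + 1)) + (2 - γ) / γ * s ^ (-γ)) * f s)
      + ENNReal.ofReal (1 / (γ * (γ - 1))) * f 1 := by
  rw [nuM, lintegral_add_measure, lintegral_withDensity_eq_lintegral_mul _ (by fun_prop) hf]
  congr 1
  rw [lintegral_smul_measure, lintegral_dirac' _ hf]
  rfl

lemma nuM_ae (γ : ℝ) : ∀ᵐ w ∂(nuM γ), 0 < w ∧ w ≤ 1 := by
  rw [nuM, ae_add_measure_iff]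
  constructor
  · refine (withDensity_absolutelyContinuous _ _).ae_le ?_
    filter_upwards [ae_restrict_mem measurableSet_Ioo] with w hw
    exact ⟨hw.1, hw.2.le⟩
  · refine Measure.ae_smul_measure ?_ _
    rw [ae_dirac_iff (by measurability)]
    norm_num

lemma nuM_moment (γ q : ℝ) (hγ1 : 1 < γ) (hγ2 : γ < 2) (hq : γ < q) :
    ∫⁻ w, ENNReal.ofReal (w ^ q) ∂(nuM γ)
      = ENNReal.ofReal (q * (q - 1) / (γ * (γ - 1) * (q - γ + 1) * (q - γ))) := by
  rw [nuM_lintegral γ _ (by fun_prop)]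
  have h1 : ∀ s, s ∈ Ioo (0:ℝ) 1 → ENNReal.ofReal (s ^ (-(γ + 1)) + (2 - γ) / γ * s ^ (-γ)) * ENNReal.ofReal (s ^ q)
      = ENNReal.ofReal (s ^ (q - γ - 1) + (2 - γ) / γ * s ^ (q - γ)) := by
    intro s hs
    have hs0 : 0 < s := hs.1
    rw [← ENNReal.ofReal_mul' (by positivity)]
    congr 1
    rw [show q - γ - 1 = -(γ + 1) + q by ring, show q - γ = -γ + q by ring, Real.rpow_add hs0, Real.rpow_add hs0]
    ring
  rw [setLIntegral_congr_fun measurableSet_Ioo h1]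
  have i1 : IntervalIntegrable (fun u : ℝ => u ^ (q - γ - 1)) volume 0 1 :=
    intervalIntegral.intervalIntegrable_rpow' (by linarith)
  have i2 : IntervalIntegrable (fun u : ℝ => u ^ (q - γ)) volume 0 1 :=
    intervalIntegral.intervalIntegrable_rpow' (by linarith)
  have i3 := i1.add (i2.const_mul ((2 - γ) / γ))
  rw [Measure.restrict_congr_set Ioo_ae_eq_Ioc]
  rw [← ofReal_integral_eq_lintegral_ofReal ((intervalIntegrable_iff_integrableOn_Ioc_of_le zero_le_one).1 i3)]
  · rw [← intervalIntegral.integral_of_le zero_le_one]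
    rw [intervalIntegral.integral_add i1 (i2.const_mul _), intervalIntegral.integral_const_mul,
      integral_rpow (Or.inl (by linarith)), integral_rpow (Or.inl (by linarith))]
    have hd1 : q - γ ≠ 0 := by linarith
    have hd2 : q - γ + 1 ≠ 0 := by linarith
    have hd3 : γ - 1 ≠ 0 := by linarith
    have hd4 : γ ≠ 0 := by linarith
    rw [Real.one_rpow, Real.one_rpow, Real.one_rpow, Real.zero_rpow (by linarith), Real.zero_rpow hd2,
      ENNReal.ofReal_one, mul_one, ← ENNReal.ofReal_add]
    · congr 1
      rw [show q - γ - 1 + 1 = q - γ by ring]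
      field_simp
      ring
    · have : 0 < q - γ := by linarith
      have : 0 < 2 - γ := by linarith
      rw [show q - γ - 1 + 1 = q - γ by ring, sub_zero]
      positivity
    · have : 0 < γ - 1 := by linarith
      positivity
  · filter_upwards [ae_restrict_mem measurableSet_Ioc] with u hu
    have hu' : 0 < u := hu.1
    have : 0 < 2 - γ := by linarith
    have : 0 < γ := by linarith
    show 0 ≤ u ^ (q - γ - 1) + (2 - γ) / γ * u ^ (q - γ)
    positivity

lemma nuM_Ici (γ y : ℝ) (hγ1 : 1 < γ) (hγ2 : γ < 2) (hy : 0 < y) (hy1 : y ≤ 1) :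
    nuM γ (Ici y) = ENNReal.ofReal (y ^ (-γ) / γ + (2 - γ) / (γ * (γ - 1)) * y ^ (1 - γ)) := by
  rw [← lintegral_indicator_one measurableSet_Ici, nuM_lintegral γ _ (by measurability)]
  have h1 : ∀ s, s ∈ Ioo (0:ℝ) 1 → ENNReal.ofReal (s ^ (-(γ + 1)) + (2 - γ) / γ * s ^ (-γ)) * (Ici y).indicator 1 s
      = (Ici y).indicator (fun s => ENNReal.ofReal (s ^ (-(γ + 1)) + (2 - γ) / γ * s ^ (-γ))) s := by
    intro s hs
    by_cases h : s ∈ Ici y <;> simp [h]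
  rw [setLIntegral_congr_fun measurableSet_Ioo h1, setLIntegral_indicator measurableSet_Ici]
  have e1 : Ici y ∩ Ioo 0 1 = Ico y 1 := by
    ext s; simp only [mem_inter_iff, mem_Ici, mem_Ioo, mem_Ico]
    constructor
    · rintro ⟨a, b, c⟩; exact ⟨a, c⟩
    · rintro ⟨a, c⟩; exact ⟨a, hy.trans_le a, c⟩
  have n0 : (0:ℝ) ∉ uIcc y 1 := by
    rw [uIcc_of_le hy1]; intro h; exact absurd h.1 (not_le.2 hy)
  have i1 : IntervalIntegrable (fun u : ℝ => u ^ (-(γ + 1))) volume y 1 :=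
    intervalIntegral.intervalIntegrable_rpow (Or.inr n0)
  have i2 : IntervalIntegrable (fun u : ℝ => u ^ (-γ)) volume y 1 :=
    intervalIntegral.intervalIntegrable_rpow (Or.inr n0)
  have i3 := i1.add (i2.const_mul ((2 - γ) / γ))
  have hd3 : γ - 1 ≠ 0 := by linarith
  have hd4 : γ ≠ 0 := by linarith
  have hd5 : 1 - γ ≠ 0 := by linarith
  rw [e1, Measure.restrict_congr_set Ico_ae_eq_Ioc]
  rw [← ofReal_integral_eq_lintegral_ofReal ((intervalIntegrable_iff_integrableOn_Ioc_of_le hy1).1 i3)]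
  · have hnn : 0 ≤ ∫ u in y..1, (u ^ (-(γ + 1)) + (2 - γ) / γ * u ^ (-γ)) := by
      refine intervalIntegral.integral_nonneg hy1 fun u hu => ?_
      have hu' : 0 < u := hy.trans_le hu.1
      have : 0 < 2 - γ := by linarith
      have : 0 < γ := by linarith
      positivity
    rw [← intervalIntegral.integral_of_le hy1, indicator_of_mem (show (1:ℝ) ∈ Ici y from hy1), Pi.one_apply, mul_one,
      ← ENNReal.ofReal_add hnn (by have : 0 < γ - 1 := by linarith
                                   positivity)]
    rw [intervalIntegral.integral_add i1 (i2.const_mul _), intervalIntegral.integral_const_mul,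
      integral_rpow (Or.inr ⟨by linarith, n0⟩), integral_rpow (Or.inr ⟨by linarith, n0⟩)]
    congr 1
    rw [show -(γ + 1) + 1 = -γ by ring, show -γ + 1 = 1 - γ by ring, Real.one_rpow, Real.one_rpow]
    have e2 : (1 - y ^ (1 - γ)) / (1 - γ) = (y ^ (1 - γ) - 1) / (γ - 1) := by
      rw [div_eq_div_iff hd5 hd3]; ring
    rw [e2]
    field_simp
    ring
  · filter_upwards [ae_restrict_mem measurableSet_Ioc] with u hu
    have hu' : 0 < u := hy.trans hu.1
    have : 0 < 2 - γ := by linarith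
    have : 0 < γ := by linarith
    show 0 ≤ u ^ (-(γ + 1)) + (2 - γ) / γ * u ^ (-γ)
    positivity

lemma nuM_Ici_zero (γ y : ℝ) (hy1 : 1 < y) : nuM γ (Ici y) = 0 := by
  have h := nuM_ae γ
  refine measure_mono_null ?_ h
  intro w hw
  simp only [mem_Ici] at hw
  simp only [mem_compl_iff, mem_ofPred_eq, not_and, not_le]
  intro _; linarith

lemma muEll_nuM (γ t x : ℝ) (hγ1 : 1 < γ) (hγ2 : γ < 2) (ht : 0 < t) (hx : 0 < x) :
    muEll γ t (Ici x) = ENNReal.ofReal (t ^ (1 - γ)) * nuM γ (Ici (x / t)) := by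
  rcases le_or_gt x t with h | h
  · rw [muEll_Ici γ t x hγ1 hx h, nuM_Ici γ (x / t) hγ1 hγ2 (by positivity) ((div_le_one ht).2 h),
      ← ENNReal.ofReal_mul (by positivity)]
    congr 1
    have hd3 : γ - 1 ≠ 0 := by linarith
    have hd4 : γ ≠ 0 := by linarith
    rw [Real.div_rpow hx.le ht.le, Real.div_rpow hx.le ht.le]
    have e1 : x ^ (1 - γ) = x * x ^ (-γ) := by
      rw [sub_eq_add_neg, Real.rpow_add hx, Real.rpow_one]
    have e2 : t ^ (1 - γ) = t * t ^ (-γ) := by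
      rw [sub_eq_add_neg, Real.rpow_add ht, Real.rpow_one]
    rw [e1, e2]
    have : t ^ (-γ) ≠ 0 := by positivity
    field_simp
    ring
  · rw [muEll_Ici_zero γ t x hx h, nuM_Ici_zero γ _ ((one_lt_div ht).2 h), mul_zero]



lemma muEllR_ae (γ t : ℝ) (FR : Measure ℝ) : ∀ᵐ v ∂(muEllR γ t FR), 0 < v := by
  unfold muEllR
  exact ae_restrict_mem measurableSet_Ioi

/-- The normalised tail. -/
def phi (γ : ℝ) (FR : Measure ℝ) (y : ℝ) : ℝ≥0∞ := (FR.prod (nuM γ)) {q | y ≤ q.1 * q.2}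

section
variable (γ : ℝ) (hγ1 : 1 < γ) (hγ2 : γ < 2) (FR : Measure ℝ) [IsProbabilityMeasure FR]
  (hFR : FR (Iic 0) = 0)

include hFR in
lemma FR_ae : ∀ᵐ r ∂FR, 0 < r := by
  rw [ae_iff]
  convert hFR using 2
  ext r; simp

include hγ1 hγ2 hFR in
lemma muEllR_Ici (t x : ℝ) (ht : 0 < t) (hx : 0 < x) :
    muEllR γ t FR (Ici x) = ENNReal.ofReal (t ^ (1 - γ)) * phi γ FR (x / t) := by
  rw [muEllR, Measure.restrict_apply measurableSet_Ici,
    inter_eq_left.2 (show Ici x ⊆ Ioi 0 from fun y hy => hx.trans_le hy),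
    Measure.map_apply (by fun_prop) measurableSet_Ici,
    Measure.prod_apply (measurableSet_Ici.preimage (by fun_prop)), phi,
    Measure.prod_apply (measurableSet_le (by fun_prop) (by fun_prop)),
    ← lintegral_const_mul' _ _ (by simp)]
  refine lintegral_congr_ae ?_
  filter_upwards [FR_ae FR hFR] with r hr
  have e1 : Prod.mk r ⁻¹' ((fun p : ℝ × ℝ => p.1 * p.2) ⁻¹' Ici x) = Ici (x / r) := by
    ext l
    simp [div_le_iff₀ hr, mul_comm]
  have e2 : Prod.mk r ⁻¹' {q : ℝ × ℝ | x / t ≤ q.1 * q.2} = Ici (x / r / t) := by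
    ext l
    simp only [mem_preimage, mem_ofPred_eq, mem_Ici]
    rw [div_div, mul_comm r t, ← div_div, div_le_iff₀ hr, mul_comm l]
  rw [e1, e2]
  exact muEll_nuM γ t (x / r) hγ1 hγ2 ht (by positivity)

include hγ1 hγ2 hFR in
lemma muEllR_moment (t p : ℝ) (ht : 0 < t) (hp : 0 < p) :
    ∫⁻ v, ENNReal.ofReal (v ^ p) ∂(muEllR γ t FR) = ENNReal.ofReal (t ^ (1 - γ) * t ^ p) *
      ((∫⁻ r, ENNReal.ofReal (r ^ p) ∂FR) * ∫⁻ w, ENNReal.ofReal (w ^ p) ∂(nuM γ)) := by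
  have hpos1 : ∀ᵐ q ∂(FR.prod (nuM γ)), 0 < q.1 :=
    Measure.quasiMeasurePreserving_fst.ae (FR_ae FR hFR)
  have hpos2 : ∀ᵐ q ∂(FR.prod (nuM γ)), 0 < q.2 :=
    Measure.quasiMeasurePreserving_snd.ae ((nuM_ae γ).mono fun _ h => h.1)
  have h2 := lintegral_rpow_eq_lintegral_meas_le_mul (μ := FR.prod (nuM γ))
    (f := fun q => t * (q.1 * q.2)) (by
      filter_upwards [hpos1, hpos2] with q h1 h2
      show 0 ≤ t * (q.1 * q.2)
      positivity) (by fun_prop) hp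
  rw [lintegral_rpow_eq_lintegral_meas_le_mul (μ := muEllR γ t FR)
    ((muEllR_ae γ t FR).mono fun v hv => hv.le) (by fun_prop) hp]
  have h3 : ∀ x ∈ Ioi (0:ℝ), muEllR γ t FR {a | x ≤ a} * ENNReal.ofReal (x ^ (p - 1))
      = ENNReal.ofReal (t ^ (1 - γ)) * ((FR.prod (nuM γ)) {q | x ≤ t * (q.1 * q.2)} * ENNReal.ofReal (x ^ (p - 1))) := by
    intro x hx
    have := muEllR_Ici γ hγ1 hγ2 FR hFR t x ht hx
    change muEllR γ t FR {a | x ≤ a} = _ at this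
    rw [this, phi, mul_assoc]
    congr 4
    ext q
    rw [div_le_iff₀ ht, mul_comm t]
  rw [setLIntegral_congr_fun measurableSet_Ioi h3, lintegral_const_mul' _ _ (by simp), mul_left_comm, ← h2,
    ENNReal.ofReal_mul (by positivity), mul_assoc]
  congr 1
  rw [← lintegral_prod_mul (by fun_prop) (by fun_prop), ← lintegral_const_mul' _ _ (by simp)]
  refine lintegral_congr_ae ?_
  filter_upwards [hpos1, hpos2] with q h1 h2
  rw [Real.mul_rpow ht.le (by positivity), Real.mul_rpow h1.le h2.le, ENNReal.ofReal_mul (by positivity),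
    ENNReal.ofReal_mul (by positivity)]

lemma phi_eq (y : ℝ) : phi γ FR y = ∫⁻ w, FR (Ici (y / w)) ∂(nuM γ) := by
  rw [phi, Measure.prod_apply_symm (measurableSet_le (by fun_prop) (by fun_prop))]
  refine lintegral_congr_ae ?_
  filter_upwards [nuM_ae γ] with w hw
  congr 1
  ext r
  simp [div_le_iff₀ hw.1]

variable (m : ℝ) (hm : γ < m)
  (hreg : ∀ c : ℝ, 0 < c →
      Tendsto (fun y => (FR (Set.Ici (c * y))).toReal / (FR (Set.Ici y)).toReal)
        atTop (𝓝 (c ^ (-m))))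

lemma G_anti : Antitone (fun y => (FR (Ici y)).toReal) := fun a b hab =>
  ENNReal.toReal_mono (measure_ne_top _ _) (measure_mono (Ici_subset_Ici.2 hab))

include hreg hFR in
lemma FR_moment (p : ℝ) (hp : 0 < p) (hpm : p < m) : ∫⁻ r, ENNReal.ofReal (r ^ p) ∂FR < ∞ := by
  obtain ⟨m1, hm1, hm1'⟩ := exists_between hpm
  obtain ⟨C, y0, hC, hy0, hpot⟩ := potter_upper (fun y => (FR (Ici y)).toReal) (G_anti FR)
    (fun _ => ENNReal.toReal_nonneg) m hreg m1 (hp.trans hm1) hm1'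
  rw [lintegral_rpow_eq_lintegral_meas_le_mul (μ := FR)
    ((FR_ae FR hFR).mono fun v hv => hv.le) (by fun_prop) hp]
  refine ENNReal.mul_lt_top (by simp) ?_
  rw [← Ioc_union_Ioi_eq_Ioi hy0.le]
  refine (lintegral_union_le _ _ _).trans_lt (ENNReal.add_lt_top.2 ⟨?_, ?_⟩)
  · have i1 : IntegrableOn (fun u : ℝ => u ^ (p - 1)) (Ioc 0 y0) :=
      (intervalIntegrable_iff_integrableOn_Ioc_of_le hy0.le).1
        (intervalIntegral.intervalIntegrable_rpow' (by linarith))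
    refine lt_of_le_of_lt ?_ i1.lintegral_lt_top
    refine lintegral_mono fun x => ?_
    calc _ ≤ 1 * ENNReal.ofReal (x ^ (p - 1)) := by gcongr; exact prob_le_one
      _ = _ := one_mul _
  · set K := C * y0 ^ m1 * (FR (Ici y0)).toReal
    have i1 : IntegrableOn (fun u : ℝ => K * u ^ (p - 1 - m1)) (Ioi y0) :=
      (integrableOn_Ioi_rpow_of_lt (by linarith) hy0).const_mul _
    refine lt_of_le_of_lt ?_ i1.lintegral_lt_top
    refine setLIntegral_mono' measurableSet_Ioi fun x hx => ?_
    have hx0 : 0 < x := hy0.trans hx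
    have hx1 : y0 < x := hx
    have h1 := hpot y0 le_rfl (y0 / x) (by positivity) ((div_le_one hx0).2 hx1.le)
    rw [div_div_cancel₀ hy0.ne', Real.div_rpow hy0.le hx0.le] at h1
    have h2 : FR {a | x ≤ a} = ENNReal.ofReal (FR (Ici x)).toReal := by
      rw [ENNReal.ofReal_toReal (measure_ne_top _ _)]; rfl
    rw [h2, ← ENNReal.ofReal_mul ENNReal.toReal_nonneg]
    apply ENNReal.ofReal_le_ofReal
    calc _ ≤ (C * (y0 ^ m1 / x ^ m1) * (FR (Ici y0)).toReal) * x ^ (p - 1) := by gcongr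
      _ = K * (x ^ (p - 1) / x ^ m1) := by ring
      _ = _ := by rw [← Real.rpow_sub hx0]

include hreg hγ1 hγ2 hm in
lemma phi_asymp : Tendsto (fun y => (phi γ FR y).toReal / (FR (Ici y)).toReal) atTop
    (𝓝 (m * (m - 1) / (γ * (γ - 1) * (m - γ + 1) * (m - γ)))) := by
  have hpos := RV_pos (fun y => (FR (Ici y)).toReal) (G_anti FR) (fun _ => ENNReal.toReal_nonneg) m hreg
  obtain ⟨m1, hm1, hm1'⟩ := exists_between hm
  obtain ⟨C, y0, hC, hy0, hpot⟩ := potter_upper (fun y => (FR (Ici y)).toReal) (G_anti FR)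
    (fun _ => ENNReal.toReal_nonneg) m hreg m1 (by linarith) hm1'
  have hmeas : ∀ y : ℝ, Measurable (fun w => (FR (Ici (y / w))).toReal) := fun y =>
    (G_anti FR).measurable.comp (measurable_const.div measurable_id)
  have hnn : ∀ q : ℝ, 0 ≤ᵐ[nuM γ] fun w : ℝ => w ^ q := fun q => by
    filter_upwards [nuM_ae γ] with w hw
    have := hw.1
    show 0 ≤ w ^ q
    positivity
  have hinteg : Integrable (fun w : ℝ => w ^ m1) (nuM γ) := by
    refine ⟨by fun_prop, ?_⟩
    rw [hasFiniteIntegral_iff_ofReal (hnn m1), nuM_moment γ m1 hγ1 hγ2 hm1]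
    exact ENNReal.ofReal_lt_top
  have hD : ∫ w, w ^ m ∂(nuM γ) = m * (m - 1) / (γ * (γ - 1) * (m - γ + 1) * (m - γ)) := by
    rw [integral_eq_lintegral_of_nonneg_ae (hnn m) (by fun_prop), nuM_moment γ m hγ1 hγ2 hm,
      ENNReal.toReal_ofReal]
    have h1 : 0 < γ - 1 := by linarith
    have h2 : 0 < m - 1 := by linarith
    have h3 : 0 < m - γ := by linarith
    have h4 : 0 < m := by linarith
    have h5 : 0 < γ := by linarith
    have h6 : 0 < m - γ + 1 := by linarith
    positivity
  have key : Tendsto (fun y => ∫ w, (FR (Ici (y / w))).toReal / (FR (Ici y)).toReal ∂(nuM γ)) atTop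
      (𝓝 (∫ w, w ^ m ∂(nuM γ))) := by
    refine tendsto_integral_filter_of_dominated_convergence (fun w => C * w ^ m1) ?_ ?_ (hinteg.const_mul C) ?_
    · exact Eventually.of_forall fun y => ((hmeas y).div_const _).aestronglyMeasurable
    · filter_upwards [eventually_ge_atTop y0] with y hy
      filter_upwards [nuM_ae γ] with w hw
      rw [Real.norm_eq_abs, abs_of_nonneg (div_nonneg ENNReal.toReal_nonneg ENNReal.toReal_nonneg),
        div_le_iff₀ (hpos y)]
      exact hpot y hy w hw.1 hw.2
    · filter_upwards [nuM_ae γ] with w hw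
      have := hreg (1 / w) (by have := hw.1; positivity)
      rw [one_div, Real.inv_rpow hw.1.le, Real.rpow_neg hw.1.le, inv_inv] at this
      refine this.congr fun y => ?_
      rw [div_eq_mul_inv y w, mul_comm y]
  rw [hD] at key
  refine key.congr fun y => ?_
  rw [integral_div, phi_eq]
  congr 1
  rw [integral_toReal]
  · have h1 : (fun w => FR (Ici (y / w))) = fun w => ENNReal.ofReal (FR (Ici (y / w))).toReal := by
      ext w; exact (ENNReal.ofReal_toReal (measure_ne_top _ _)).symm
    rw [h1]
    exact (hmeas y).ennreal_ofReal.aemeasurable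
  · exact Eventually.of_forall fun w => measure_lt_top _ _
end



lemma sq_mul_exp_tendsto : Tendsto (fun x : ℝ => x ^ 2 * Real.exp (-(x / 2))) atTop (𝓝 0) := by
  have h := Real.tendsto_pow_mul_exp_neg_atTop_nhds_zero 2
  have h2 : Tendsto (fun x : ℝ => x / 2) atTop atTop := tendsto_id.atTop_div_const (by norm_num)
  have h3 := (h.comp h2).const_mul 4
  simp only [Function.comp_def, mul_zero] at h3
  refine h3.congr fun x => ?_
  ring

lemma chernoff_asymp (γ p M η m2 c y0 : ℝ) (hγ : 1 < γ) (hp1 : 1 < p) (hp2 : p ≤ 2) (hM : 0 < M)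
    (hη : 0 < η) (hη1 : η < 1) (hm2 : 0 < m2) (hc : 0 < c)
    (G : ℝ → ℝ) (hG : ∀ x, y0 ≤ x → c * x ^ (-m2) ≤ G x)
    (ρ : ℝ → ℝ) (hρpos : ∀ t, 0 < ρ t) (hρt : Tendsto (fun t => ρ t / t) atTop atTop) :
    ∃ ε, 0 < ε ∧ ε ≤ 1 ∧ ∃ s : ℝ → ℝ, (∀ᶠ t in atTop, 0 < s t) ∧
      Tendsto (fun t => Real.exp ((s t) ^ 2 * Real.exp (s t * (ε * ρ t)) *
        ((ε * ρ t) ^ (2 - p) * (M * t ^ (1 - γ + p))) - s t * (η * ρ t)) /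
          (t ^ (-(γ - 1)) * G (ρ t / t))) atTop (𝓝 0) := by
  set K := m2 + 2 with hK
  set ε := η / (2 * K) with hε
  have hK0 : 0 < K := by linarith
  have hε0 : 0 < ε := by positivity
  have hε1 : ε ≤ 1 := by
    rw [hε, div_le_one (by positivity)]; linarith
  set W : ℝ → ℝ := fun t => M * (t ^ (-(γ - 1)) * (ρ t / t) ^ (-p)) with hW
  have t1 : Tendsto (fun t : ℝ => t ^ (-(γ - 1))) atTop (𝓝 0) :=
    tendsto_rpow_neg_atTop (by linarith)
  have t2 : Tendsto (fun t : ℝ => (ρ t / t) ^ (-p)) atTop (𝓝 0) :=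
    (tendsto_rpow_neg_atTop (by linarith)).comp hρt
  have hW0 : Tendsto W atTop (𝓝 0) := by
    have := (t1.mul t2).const_mul M
    simpa [hW] using this
  have hWpos : ∀ᶠ t in atTop, 0 < W t := by
    filter_upwards [eventually_gt_atTop 0] with t ht
    have := hρpos t
    simp only [hW]; positivity
  have hlog : Tendsto (fun t => - Real.log (W t)) atTop atTop := by
    have h1 : Tendsto W atTop (𝓝[>] 0) :=
      tendsto_nhdsWithin_iff.2 ⟨hW0, hWpos⟩
    exact tendsto_neg_atBot_atTop.comp (Real.tendsto_log_nhdsGT_zero.comp h1)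
  refine ⟨ε, hε0, hε1, fun t => (- Real.log (W t)) / (2 * ε) / ρ t, ?_, ?_⟩
  · filter_upwards [hlog.eventually_gt_atTop 0] with t ht
    have := hρpos t
    positivity
  have hsmall : ∀ᶠ t in atTop, (- Real.log (W t)) ^ 2 * Real.exp (-((- Real.log (W t)) / 2))
      ≤ 4 * ε ^ 2 :=
    ((sq_mul_exp_tendsto.comp hlog).eventually_lt_const (by positivity : (0:ℝ) < 4 * ε ^ 2)).mono
      fun t ht => le_of_lt ht
  have hb : Tendsto (fun t : ℝ => Real.exp 1 * M ^ K / c *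
      (t ^ (-((γ - 1) * (K - 1))) * (ρ t / t) ^ (-(p * K - m2)))) atTop (𝓝 0) := by
    have a1 : Tendsto (fun t : ℝ => t ^ (-((γ - 1) * (K - 1)))) atTop (𝓝 0) :=
      tendsto_rpow_neg_atTop (by
        have : 0 < K - 1 := by linarith
        have : 0 < γ - 1 := by linarith
        positivity)
    have a2 : Tendsto (fun t : ℝ => (ρ t / t) ^ (-(p * K - m2))) atTop (𝓝 0) :=
      (tendsto_rpow_neg_atTop (by nlinarith)).comp hρt
    have := (a1.mul a2).const_mul (Real.exp 1 * M ^ K / c)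
    simpa using this
  refine squeeze_zero' ?_ ?_ hb
  · filter_upwards [eventually_gt_atTop 0, hρt.eventually_ge_atTop y0] with t ht hy
    have := hρpos t
    have h1 : 0 ≤ G (ρ t / t) := le_trans (by positivity) (hG _ hy)
    positivity
  filter_upwards [eventually_gt_atTop 0, hρt.eventually_ge_atTop y0, hsmall, hWpos] with t ht hy hs hw
  have hr := hρpos t
  set y := ρ t / t with hydef
  have hy0 : 0 < y := by positivity
  have hρ : ρ t = t * y := by rw [hydef]; field_simp
  have hV : (ε * ρ t) ^ (2 - p) * (M * t ^ (1 - γ + p)) ≤ (ρ t) ^ 2 * W t := by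
    have e1 : (ε * ρ t) ^ (2 - p) ≤ (ρ t) ^ (2 - p) := by
      apply Real.rpow_le_rpow (by positivity) _ (by linarith)
      nlinarith
    calc _ ≤ (ρ t) ^ (2 - p) * (M * t ^ (1 - γ + p)) := by gcongr
      _ = (ρ t) ^ 2 * W t := by
        simp only [hW]
        rw [← hydef, hρ, Real.rpow_sub (by positivity), Real.rpow_two, Real.mul_rpow ht.le hy0.le,
          show 1 - γ + p = -(γ - 1) + p by ring, Real.rpow_add ht, Real.rpow_neg hy0.le]
        field_simp
  set x := - Real.log (W t) with hx
  have hexpo : (x / (2 * ε) / ρ t) ^ 2 * Real.exp (x / (2 * ε) / ρ t * (ε * ρ t)) *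
        ((ε * ρ t) ^ (2 - p) * (M * t ^ (1 - γ + p))) - x / (2 * ε) / ρ t * (η * ρ t) ≤ 1 + (-x) * K := by
    have e1 : x / (2 * ε) / ρ t * (ε * ρ t) = x / 2 := by field_simp
    have e2 : x / (2 * ε) / ρ t * (η * ρ t) = x * K := by rw [hε]; field_simp
    rw [e1, e2]
    have e3 : W t = Real.exp (-x) := by rw [hx, neg_neg, Real.exp_log hw]
    have : (x / (2 * ε) / ρ t) ^ 2 * Real.exp (x / 2) *
        ((ε * ρ t) ^ (2 - p) * (M * t ^ (1 - γ + p))) ≤ 1 := by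
      calc _ ≤ (x / (2 * ε) / ρ t) ^ 2 * Real.exp (x / 2) * ((ρ t) ^ 2 * W t) := by gcongr
        _ = x ^ 2 * (Real.exp (x / 2) * Real.exp (-x)) / (4 * ε ^ 2) := by
          rw [e3]; field_simp; norm_num
        _ = x ^ 2 * Real.exp (-(x / 2)) / (4 * ε ^ 2) := by
          rw [← Real.exp_add]; congr 3; ring
        _ ≤ 1 := by rw [div_le_one (by positivity)]; exact hs
    linarith
  have hE := Real.exp_le_exp.2 hexpo
  rw [Real.exp_add 1, Real.exp_mul (-x) K, show Real.exp (-x) = W t by rw [hx, neg_neg, Real.exp_log hw]] at hE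
  have hg := hG y hy
  calc _ ≤ Real.exp 1 * (W t) ^ K / (t ^ (-(γ - 1)) * (c * y ^ (-m2))) := by gcongr
    _ = _ := by
      simp only [hW]
      rw [← hydef, Real.mul_rpow hM.le (by positivity), Real.mul_rpow (by positivity) (by positivity),
        ← Real.rpow_mul ht.le, ← Real.rpow_mul hy0.le,
        show -(γ - 1) * K = -((γ - 1) * (K - 1)) + -(γ-1) by ring,
        show -p * K = -(p * K - m2) + -m2 by ring, Real.rpow_add ht, Real.rpow_add hy0]
      have := (Real.rpow_pos_of_pos ht (-(γ-1))).ne'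
      have := (Real.rpow_pos_of_pos hy0 (-m2)).ne'
      field_simp



/-- The full Levy measure. -/
def muQ (γ Q t : ℝ) (FR : Measure ℝ) : Measure ℝ := ENNReal.ofReal Q • muEllR γ t FR

lemma muQ_ae (γ Q t : ℝ) (FR : Measure ℝ) : ∀ᵐ v ∂(muQ γ Q t FR), 0 < v :=
  Measure.ae_smul_measure (muEllR_ae γ t FR) _

lemma muQ_tail (γ Q : ℝ) (hγ1 : 1 < γ) (hγ2 : γ < 2) (hQ : 0 < Q)
    (FR : Measure ℝ) [IsProbabilityMeasure FR] (hFR : FR (Set.Iic 0) = 0)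
    (m : ℝ) (hm : γ < m)
    (hreg : ∀ c : ℝ, 0 < c →
      Tendsto (fun y => (FR (Set.Ici (c * y))).toReal / (FR (Set.Ici y)).toReal)
        atTop (𝓝 (c ^ (-m))))
    (ρ : ℝ → ℝ) (hρpos : ∀ t, 0 < ρ t)
    (hρt : Tendsto (fun t => ρ t / t) atTop atTop) (c : ℝ) (hc : 0 < c) :
    Tendsto (fun t => (muQ γ Q t FR).real (Ici (c * ρ t)) /
      (t ^ (-(γ - 1)) * (FR (Set.Ici (ρ t / t))).toReal)) atTop
      (𝓝 (Q * (m * (m - 1) / (γ * (γ - 1) * (m - γ + 1) * (m - γ))) * c ^ (-m))) := by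
  have hpos := RV_pos (fun y => (FR (Ici y)).toReal) (G_anti FR) (fun _ => ENNReal.toReal_nonneg) m hreg
  have hcy : Tendsto (fun t => c * (ρ t / t)) atTop atTop := hρt.const_mul_atTop hc
  have h1 := (phi_asymp γ hγ1 hγ2 FR m hm hreg).comp hcy
  have h2 := (hreg c hc).comp hρt
  have h3 := (h1.mul h2).const_mul Q
  rw [← mul_assoc] at h3
  refine h3.congr' ?_
  filter_upwards [eventually_gt_atTop 0] with t ht
  have hr := hρpos t
  simp only [Function.comp_def]
  rw [Measure.real, muQ, Measure.smul_apply, muEllR_Ici γ hγ1 hγ2 FR hFR t _ ht (by positivity),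
    smul_eq_mul, ENNReal.toReal_mul, ENNReal.toReal_mul, ENNReal.toReal_ofReal hQ.le,
    ENNReal.toReal_ofReal (by positivity), mul_div_assoc c, neg_sub]
  have a1 : (FR (Ici (c * (ρ t / t)))).toReal ≠ 0 := (hpos (c * (ρ t / t))).ne'
  have a2 : (FR (Ici (ρ t / t))).toReal ≠ 0 := (hpos (ρ t / t)).ne'
  generalize (FR (Ici (c * (ρ t / t)))).toReal = u1 at a1 ⊢
  generalize (FR (Ici (ρ t / t))).toReal = u2 at a2 ⊢
  have a3 := (Real.rpow_pos_of_pos ht (1 - γ)).ne'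
  field_simp

lemma muQ_moment (γ Q : ℝ) (hγ1 : 1 < γ) (hγ2 : γ < 2) (hQ : 0 < Q)
    (FR : Measure ℝ) [IsProbabilityMeasure FR] (hFR : FR (Set.Iic 0) = 0)
    (m : ℝ)
    (hreg : ∀ c : ℝ, 0 < c →
      Tendsto (fun y => (FR (Set.Ici (c * y))).toReal / (FR (Set.Ici y)).toReal)
        atTop (𝓝 (c ^ (-m))))
    (p : ℝ) (hp : γ < p) (hpm : p < m) :
    ∃ M, 0 < M ∧ ∀ t, 0 < t → Integrable (fun v => v ^ p) (muQ γ Q t FR) ∧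
      ∫ v, v ^ p ∂(muQ γ Q t FR) ≤ M * t ^ (1 - γ + p) := by
  have hF := FR_moment FR hFR m hreg p (by linarith) hpm
  have hN : ∫⁻ w, ENNReal.ofReal (w ^ p) ∂(nuM γ) < ∞ := by
    rw [nuM_moment γ p hγ1 hγ2 hp]; exact ENNReal.ofReal_lt_top
  set A := (∫⁻ r, ENNReal.ofReal (r ^ p) ∂FR) * ∫⁻ w, ENNReal.ofReal (w ^ p) ∂(nuM γ) with hA
  have hAt : A < ∞ := ENNReal.mul_lt_top hF hN
  refine ⟨Q * A.toReal + 1, by positivity, fun t ht => ?_⟩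
  have hmom : ∫⁻ v, ENNReal.ofReal (v ^ p) ∂(muQ γ Q t FR)
      = ENNReal.ofReal Q * (ENNReal.ofReal (t ^ (1 - γ) * t ^ p) * A) := by
    rw [muQ, lintegral_smul_measure, muEllR_moment γ hγ1 hγ2 FR hFR t p ht (by linarith), smul_eq_mul]
  have hnn : 0 ≤ᵐ[muQ γ Q t FR] fun v : ℝ => v ^ p := by
    filter_upwards [muQ_ae γ Q t FR] with v hv
    exact Real.rpow_nonneg hv.le _
  constructor
  · refine ⟨by fun_prop, ?_⟩
    rw [hasFiniteIntegral_iff_ofReal hnn, hmom]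
    exact ENNReal.mul_lt_top (by simp) (ENNReal.mul_lt_top (by simp) hAt)
  · rw [integral_eq_lintegral_of_nonneg_ae hnn (by fun_prop), hmom, ENNReal.toReal_mul,
      ENNReal.toReal_mul, ENNReal.toReal_ofReal hQ.le, ENNReal.toReal_ofReal (by positivity),
      ← Real.rpow_add ht]
    have : 0 ≤ t ^ (1 - γ + p) := by positivity
    nlinarith

theorem main_X (γ Q : ℝ) (hγ1 : 1 < γ) (hγ2 : γ < 2) (hQ : 0 < Q)
    (FR : Measure ℝ) [IsProbabilityMeasure FR] (hFRpos : FR (Set.Iic 0) = 0)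
    (Ω : Type*) [MeasurableSpace Ω] (P : Measure Ω) [IsProbabilityMeasure P]
    (Y : ℝ → Ω → ℝ) (hYmeas : ∀ t, Measurable (Y t))
    (hYchar : ∀ t : ℝ, 0 < t → ∀ θ : ℝ,
      ∫ ω, Complex.exp (θ * Y t ω * Complex.I) ∂P
        = Complex.exp (Q * ∫ v, (Complex.exp (θ * v * Complex.I) - 1 - θ * v * Complex.I)
            ∂(muEllR γ t FR)))
    (m : ℝ) (hm : γ < m)
    (hreg : ∀ c : ℝ, 0 < c →
      Tendsto (fun y => (FR (Set.Ici (c * y))).toReal / (FR (Set.Ici y)).toReal)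
        atTop (𝓝 (c ^ (-m))))
    (ρ : ℝ → ℝ) (hρpos : ∀ t, 0 < ρ t)
    (hρt : Tendsto (fun t => ρ t / t) atTop atTop) :
    Tendsto
      (fun t => (P {ω | ρ t ≤ Y t ω}).toReal
        / (t ^ (-(γ - 1)) * (FR (Set.Ici (ρ t / t))).toReal))
      atTop (𝓝 (Q * (m * (m - 1) / (γ * (γ - 1) * (m - γ + 1) * (m - γ))))) := by
  set D := m * (m - 1) / (γ * (γ - 1) * (m - γ + 1) * (m - γ)) with hD
  have hpos := RV_pos (fun y => (FR (Ici y)).toReal) (G_anti FR) (fun _ => ENNReal.toReal_nonneg) m hreg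
  obtain ⟨p, hp, hpm'⟩ := exists_between (lt_min hm hγ2)
  have hpm : p < m := hpm'.trans_le (min_le_left _ _)
  have hp2 : p ≤ 2 := (hpm'.trans_le (min_le_right _ _)).le
  have hp1 : 1 < p := hγ1.trans hp
  obtain ⟨M, hM, hmom⟩ := muQ_moment γ Q hγ1 hγ2 hQ FR hFRpos m hreg p hp hpm
  obtain ⟨c, y0, hc, hy0, hlow⟩ := potter_lower (fun y => (FR (Ici y)).toReal) (G_anti FR)
    (fun _ => ENNReal.toReal_nonneg) m hreg (m + 1) (by linarith) (by linarith)
  have htail := muQ_tail γ Q hγ1 hγ2 hQ FR hFRpos m hm hreg ρ hρpos hρt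
  have hchar : ∀ t, 0 < t → ∀ θ : ℝ, charFun (P.map (Y t)) θ
      = Complex.exp (∫ v, kk θ v ∂(muQ γ Q t FR)) := by
    intro t ht θ
    rw [charFun_apply_real, integral_map (hYmeas t).aemeasurable (by fun_prop), hYchar t ht θ, muQ,
      integral_smul_measure, ENNReal.toReal_ofReal hQ.le, Complex.real_smul]
    rfl
  have hreal : ∀ t, (P.map (Y t)).real (Ici (ρ t)) = (P {ω | ρ t ≤ Y t ω}).toReal := by
    intro t
    rw [Measure.real, Measure.map_apply (hYmeas t) measurableSet_Ici]
    rfl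
  have hprob : ∀ t, IsProbabilityMeasure (P.map (Y t)) := fun t =>
    Measure.isProbabilityMeasure_map (hYmeas t).aemeasurable
  simp only [← hreal]
  set g : ℝ → ℝ := fun t => t ^ (-(γ - 1)) * (FR (Set.Ici (ρ t / t))).toReal with hg
  have hgpos : ∀ t, 0 < t → 0 < g t := fun t ht => mul_pos (by positivity) (hpos _)
  have t1 : Tendsto (fun t : ℝ => t ^ (-(γ - 1))) atTop (𝓝 0) :=
    tendsto_rpow_neg_atTop (by linarith)
  have hg0 : Tendsto g atTop (𝓝 0) := by
    refine squeeze_zero' ?_ ?_ t1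
    · filter_upwards [eventually_gt_atTop 0] with t ht using (hgpos t ht).le
    · filter_upwards [eventually_gt_atTop 0] with t ht
      have h1 : (FR (Set.Ici (ρ t / t))).toReal ≤ 1 := measureReal_le_one
      have h2 : 0 ≤ t ^ (-(γ - 1)) := by positivity
      simp only [hg]
      nlinarith
  -- large atoms
  have hlam : ∀ ε, 0 < ε → Tendsto (fun t => (muQ γ Q t FR).real (Ici (ε * ρ t))) atTop (𝓝 0) := by
    intro ε hε
    have := (htail ε hε).mul hg0
    rw [mul_zero] at this
    refine this.congr' ?_
    filter_upwards [eventually_gt_atTop 0] with t ht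
    exact div_mul_cancel₀ _ (hgpos t ht).ne'
  have hlam2 : ∀ ε, 0 < ε → Tendsto (fun t => (muQ γ Q t FR).real (Ici (ε * ρ t)) ^ 2 / g t)
      atTop (𝓝 0) := by
    intro ε hε
    have := (htail ε hε).mul (hlam ε hε)
    rw [mul_zero] at this
    refine this.congr fun t => ?_
    simp only [hg]
    ring
  have upper : ∀ η, 0 < η → η < 1 / 2 → ∀ b, Q * D * (1 - 2 * η) ^ (-m) < b →
      ∀ᶠ t in atTop, (P.map (Y t)).real (Ici (ρ t)) / g t < b := by
    intro η hη hη1 b hb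
    obtain ⟨ε, hε, hε1, s, hs, hE⟩ := chernoff_asymp γ p M η (m + 1) c y0 hγ1 hp1 hp2 hM hη
      (by linarith) (by linarith) hc _ hlow ρ hρpos hρt
    have hsum := (hE.add ((htail (1 - 2 * η) (by linarith)).add (hlam2 ε hε)))
    rw [zero_add, add_zero] at hsum
    filter_upwards [hsum.eventually_lt_const hb, eventually_gt_atTop 0, hs] with t hlt ht hst
    refine lt_of_le_of_lt ?_ hlt
    have hr := hρpos t
    have hgt := hgpos t ht
    have := hprob t
    have hu := pi_upper (muQ γ Q t FR) (muQ_ae γ Q t FR) p hp1 hp2 (hmom t ht).1 (P.map (Y t))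
      (hchar t ht) (ε * ρ t) (η * ρ t) ((1 - 2 * η) * ρ t) (s t) (by positivity)
      (mul_pos (by linarith) hr) hst
    have hmono : (P.map (Y t)).real (Ici (ρ t))
        ≤ (P.map (Y t)).real (Ioi (η * ρ t + (1 - 2 * η) * ρ t)) := by
      refine measureReal_mono ?_ (measure_ne_top _ _)
      intro z hz
      have hz' : ρ t ≤ z := hz
      show _ < z
      nlinarith
    rw [← add_div, ← add_div]
    apply div_le_div_of_nonneg_right _ hgt.le
    refine hmono.trans (hu.trans ?_)
    gcongr
    exact (hmom t ht).2
  have lower : ∀ η, 0 < η → η < 1 / 2 → ∀ b, b < Q * D * (1 + 2 * η) ^ (-m) →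
      ∀ᶠ t in atTop, b < (P.map (Y t)).real (Ici (ρ t)) / g t := by
    intro η hη hη1 b hb
    obtain ⟨ε, hε, hε1, s, hs, hE⟩ := chernoff_asymp γ p M η (m + 1) c y0 hγ1 hp1 hp2 hM hη
      (by linarith) (by linarith) hc _ hlow ρ hρpos hρt
    set E : ℝ → ℝ := fun t => Real.exp ((s t) ^ 2 * Real.exp (s t * (ε * ρ t)) *
        ((ε * ρ t) ^ (2 - p) * (M * t ^ (1 - γ + p))) - s t * (η * ρ t)) with hEdef
    have hE0 : Tendsto E atTop (𝓝 0) := by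
      have := hE.mul hg0
      rw [mul_zero] at this
      refine this.congr' ?_
      filter_upwards [eventually_gt_atTop 0] with t ht
      exact div_mul_cancel₀ _ (hgpos t ht).ne'
    have hexp : Tendsto (fun t => Real.exp (-((muQ γ Q t FR).real (Ici (ε * ρ t))))) atTop (𝓝 1) := by
      have := (Real.continuous_exp.tendsto _).comp (hlam ε hε).neg
      simpa [Function.comp_def] using this
    have hprod := (hE0.const_sub 1).mul (hexp.mul (htail (1 + 2 * η) (by linarith)))
    rw [sub_zero, one_mul, one_mul] at hprod
    have hdrift : Tendsto (fun t : ℝ => ε ^ (1 - p) * M * (t ^ (-(γ - 1)) * (ρ t / t) ^ (-p)))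
        atTop (𝓝 0) := by
      have t2 : Tendsto (fun t : ℝ => (ρ t / t) ^ (-p)) atTop (𝓝 0) :=
        (tendsto_rpow_neg_atTop (by linarith)).comp hρt
      simpa using (t1.mul t2).const_mul (ε ^ (1 - p) * M)
    filter_upwards [hprod.eventually_const_lt hb, eventually_gt_atTop 0, hs,
      hdrift.eventually_lt_const hη] with t hlt ht hst hdr
    refine lt_of_lt_of_le hlt ?_
    have hr := hρpos t
    have hgt := hgpos t ht
    have := hprob t
    have hmt := (hmom t ht).2
    have hdr2 : (ε * ρ t) ^ (1 - p) * ∫ v, v ^ p ∂(muQ γ Q t FR) ≤ η * ρ t := by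
      calc _ ≤ (ε * ρ t) ^ (1 - p) * (M * t ^ (1 - γ + p)) := by gcongr
        _ = (ε ^ (1 - p) * M * (t ^ (-(γ - 1)) * (ρ t / t) ^ (-p))) * ρ t := by
          rw [Real.mul_rpow hε.le hr.le, Real.div_rpow hr.le ht.le,
            show 1 - γ + p = -(γ - 1) + p by ring, Real.rpow_add ht, Real.rpow_neg ht.le p,
            sub_eq_add_neg 1 p, Real.rpow_add hr, Real.rpow_one]
          field_simp
        _ ≤ _ := by gcongr
    have hl := pi_lower (muQ γ Q t FR) (muQ_ae γ Q t FR) p hp1 hp2 (hmom t ht).1 (P.map (Y t))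
      (hchar t ht) (ε * ρ t) (η * ρ t) (ρ t) ((1 + 2 * η) * ρ t) (s t) (by positivity)
      hst (by nlinarith) (by linarith)
    rw [mul_div_assoc', mul_div_assoc']
    apply div_le_div_of_nonneg_right _ hgt.le
    refine le_trans ?_ hl
    gcongr
    simp only [hEdef]
    gcongr
  have cont : ∀ k : ℝ, Tendsto (fun η : ℝ => Q * D * (1 + k * η) ^ (-m)) (𝓝[>] 0) (𝓝 (Q * D)) := by
    intro k
    have : ContinuousAt (fun η : ℝ => Q * D * (1 + k * η) ^ (-m)) 0 := by
      refine continuousAt_const.mul (ContinuousAt.rpow_const (by fun_prop) (Or.inl (by simp)))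
    have h := this.tendsto
    simp only [mul_zero, add_zero, Real.one_rpow, mul_one] at h
    exact h.mono_left nhdsWithin_le_nhds
  have hsm : ∀ᶠ η : ℝ in 𝓝[>] 0, 0 < η ∧ η < 1 / 2 := by
    have : Ioo (0:ℝ) (1/2) ∈ 𝓝[>] (0:ℝ) := Ioo_mem_nhdsGT (by norm_num)
    exact this
  rw [tendsto_order]
  constructor
  · intro b hb
    obtain ⟨η, ⟨h1, h2⟩, h3⟩ := (hsm.and ((cont 2).eventually_const_lt hb)).exists
    exact lower η h1 h2 b h3
  · intro b hb
    obtain ⟨η, ⟨h1, h2⟩, h3⟩ := (hsm.and ((cont (-2)).eventually_lt_const hb)).exists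
    refine upper η h1 h2 b ?_
    rwa [show 1 - 2 * η = 1 + -2 * η by ring]

end
end AuxProofs

/-- Ultralarge deviations: if `ρ(t)/t → ∞` and the tail `F̄_R(y) = P(R ≥ y)` is regularly
varying of index `-m` with `m > γ`, then
`P(Y_t ≥ ρ(t)) = Q·D·t^{-(γ-1)}·F̄_R(ρ(t)/t)·(1+o(1))` as `t → ∞`, where
`D = m(m-1)/(γ(γ-1)(m-γ+1)(m-γ))`. -/
theorem stmt_4 (γ Q : ℝ) (hγ1 : 1 < γ) (hγ2 : γ < 2) (hQ : 0 < Q)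
    (FR : Measure ℝ) [IsProbabilityMeasure FR] (hFRpos : FR (Set.Iic 0) = 0)
    (hmom : Integrable (fun r => r ^ γ) FR)
    (Ω : Type*) [MeasurableSpace Ω] (P : Measure Ω) [IsProbabilityMeasure P]
    (Y : ℝ → Ω → ℝ) (hYmeas : ∀ t, Measurable (Y t))
    (hYchar : ∀ t : ℝ, 0 < t → ∀ θ : ℝ,
      ∫ ω, Complex.exp (θ * Y t ω * Complex.I) ∂P
        = Complex.exp (Q * ∫ v, (Complex.exp (θ * v * Complex.I) - 1 - θ * v * Complex.I)
            ∂(muEllR γ t FR)))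
    (m : ℝ) (hm : γ < m)
    (hreg : ∀ c : ℝ, 0 < c →
      Tendsto (fun y => (FR (Set.Ici (c * y))).toReal / (FR (Set.Ici y)).toReal)
        atTop (𝓝 (c ^ (-m))))
    (ρ : ℝ → ℝ) (hρpos : ∀ t, 0 < ρ t)
    (hρt : Tendsto (fun t => ρ t / t) atTop atTop) :
    Tendsto
      (fun t => (P {ω | ρ t ≤ Y t ω}).toReal
        / (t ^ (-(γ - 1)) * (FR (Set.Ici (ρ t / t))).toReal))
      atTop (𝓝 (Q * (m * (m - 1) / (γ * (γ - 1) * (m - γ + 1) * (m - γ))))) := by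
  exact main_X γ Q hγ1 hγ2 hQ FR hFRpos Ω P Y hYmeas hYchar m hm hreg ρ hρpos hρt
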